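/- arXiv:2510.27574 — 9 statements merged into one kernel-verified Lean document; each statement's English description precedes it below -/
import Mathlib

section
/- Let α = (a_1,…,a_n) be a Fubini ranking with n competitors. Then all n cars park under the parking process (i.e., α is a parking function), the set of lucky cars of α equals {i ∈ [n] : a_i ≠ a_j for all j < i} (the first occurrences of each value), and consequently the number of lucky cars of α equals the number of distinct values occurring among the entries of α. -/
/-- A Fubini ranking with `n` competitors: entries are in `[n]` (represented by `Fin n`,
where `i : Fin n` stands for the rank `i.val + 1`), and for every rank `r` occurring among
the entries, the number of indices `j` whose entry is strictly smaller than `r` equals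
`r - 1` (i.e. `r.val` in the `Fin n` encoding). -/
def IsFubini {n : ℕ} (α : Fin n → Fin n) : Prop :=
  ∀ r : Fin n, (∃ i, α i = r) →
    (Finset.univ.filter (fun j => α j < r)).card = (r : ℕ)

/-- The set of lucky cars of `α`: car `i` is lucky iff it is the first occurrence of its
value, i.e. `α j ≠ α i` for all `j < i`. -/
def luckySet {n : ℕ} (α : Fin n → Fin n) : Finset (Fin n) :=
  Finset.univ.filter (fun i => ∀ j, j < i → α j ≠ α i)

/-- The number of lucky cars of `α`. -/
def lucky {n : ℕ} (α : Fin n → Fin n) : ℕ := (luckySet α).card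

instance {n : ℕ} : DecidablePred (IsFubini (n := n)) := fun α =>
  inferInstanceAs (Decidable (∀ r : Fin n, (∃ i, α i = r) →
    (Finset.univ.filter (fun j => α j < r)).card = (r : ℕ)))

/-- The cars preceding car `i` when cars are ordered by preference, ties broken by arrival. -/
def carsBefore {n : ℕ} (α : Fin n → Fin n) (i : Fin n) : Finset (Fin n) :=
  Finset.univ.filter (fun j => α j < α i ∨ α j = α i ∧ j < i)

theorem mem_carsBefore {n : ℕ} {α : Fin n → Fin n} {i j : Fin n} :
    j ∈ carsBefore α i ↔ α j < α i ∨ α j = α i ∧ j < i := by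
  simp [carsBefore]

theorem card_carsBefore_lt {n : ℕ} (α : Fin n → Fin n) (i : Fin n) :
    (carsBefore α i).card < n := by
  have h : (carsBefore α i).card < (Finset.univ : Finset (Fin n)).card := by
    refine Finset.card_lt_card (Finset.ssubset_univ_iff.2 fun h => ?_)
    have hi : i ∈ carsBefore α i := h ▸ Finset.mem_univ i
    simp [mem_carsBefore] at hi
  simpa using h

/-- The spot of car `i`: the number of cars preceding it in the order of `carsBefore`. -/
def parkingSpot {n : ℕ} (α : Fin n → Fin n) (i : Fin n) : Fin n :=
  ⟨(carsBefore α i).card, card_carsBefore_lt α i⟩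

theorem parkingSpot_lt_of_mem_carsBefore {n : ℕ} {α : Fin n → Fin n} {i j : Fin n}
    (h : j ∈ carsBefore α i) : parkingSpot α j < parkingSpot α i := by
  refine Fin.mk_lt_mk.2 (Finset.card_lt_card ((Finset.ssubset_iff_of_subset ?_).2 ⟨j, h, ?_⟩))
  · intro k hk
    rw [mem_carsBefore] at *
    grind
  · simp [mem_carsBefore]

theorem mem_carsBefore_or_of_ne {n : ℕ} {α : Fin n → Fin n} {i j : Fin n} (h : i ≠ j) :
    i ∈ carsBefore α j ∨ j ∈ carsBefore α i := by
  simp only [mem_carsBefore]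
  grind

theorem parkingSpot_injective {n : ℕ} (α : Fin n → Fin n) :
    Function.Injective (parkingSpot α) := by
  intro i j hij
  by_contra hne
  rcases mem_carsBefore_or_of_ne (α := α) hne with h | h
  · exact (parkingSpot_lt_of_mem_carsBefore h).ne hij
  · exact (parkingSpot_lt_of_mem_carsBefore h).ne' hij

namespace IsFubini

variable {n : ℕ} {α : Fin n → Fin n}

theorem parkingSpot_val (hα : IsFubini α) (i : Fin n) :
    (parkingSpot α i : ℕ) =
      α i + (Finset.univ.filter (fun j => α j = α i ∧ j < i)).card := by
  change (carsBefore α i).card = _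
  rw [← hα (α i) ⟨i, rfl⟩, carsBefore, Finset.filter_or, Finset.card_union_of_disjoint]
  exact Finset.disjoint_filter.2 fun j _ h h' => h.ne h'.1

theorem le_parkingSpot (hα : IsFubini α) (i : Fin n) : α i ≤ parkingSpot α i := by
  rw [Fin.le_def, hα.parkingSpot_val]
  exact Nat.le_add_right _ _

theorem parkingSpot_lt_of_lt (hα : IsFubini α) {i j : Fin n} (h : α j < α i) :
    parkingSpot α j < α i := by
  rw [Fin.lt_def, ← hα (α i) ⟨i, rfl⟩]
  refine Finset.card_lt_card (s := carsBefore α j) ((Finset.ssubset_iff_of_subset ?_).2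
    ⟨j, by simpa using h, ?_⟩)
  · intro k hk
    rw [mem_carsBefore] at hk
    simp only [Finset.mem_filter, Finset.mem_univ, true_and]
    grind
  · simp [mem_carsBefore]

theorem exists_lt_parkingSpot_eq (hα : IsFubini α) {i s : Fin n} (his : α i ≤ s)
    (hs : s < parkingSpot α i) : ∃ j, j < i ∧ parkingSpot α j = s := by
  obtain ⟨j, rfl⟩ := Finite.surjective_of_injective (parkingSpot_injective α) s
  refine ⟨j, ?_, rfl⟩
  have hne : j ≠ i := fun h => hs.ne (h ▸ rfl)
  rcases mem_carsBefore_or_of_ne (α := α) hne with h | h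
  · rcases mem_carsBefore.1 h with h | h
    · exact absurd (hα.parkingSpot_lt_of_lt h) his.not_gt
    · exact h.2
  · exact absurd (parkingSpot_lt_of_mem_carsBefore h) hs.not_gt

theorem parkingSpot_eq_iff (hα : IsFubini α) (i : Fin n) :
    parkingSpot α i = α i ↔ ∀ j, j < i → α j ≠ α i := by
  rw [Fin.ext_iff, hα.parkingSpot_val, Nat.add_eq_left, Finset.card_eq_zero,
    Finset.filter_eq_empty_iff]
  simp only [Finset.mem_univ, true_implies]
  grind

end IsFubini

theorem lucky_eq_card_image {n : ℕ} (α : Fin n → Fin n) :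
    lucky α = (Finset.univ.image α).card := by
  have himage : (luckySet α).image α = Finset.univ.image α := by
    refine (Finset.image_subset_image (Finset.subset_univ _)).antisymm fun r hr => ?_
    obtain ⟨i, -, hi⟩ := Finset.mem_image.1 hr
    obtain ⟨m, hm, hmin⟩ := WellFounded.has_min (wellFounded_lt (α := Fin n))
      {j | α j = r} ⟨i, hi⟩
    refine Finset.mem_image.2 ⟨m, ?_, hm⟩
    simp only [luckySet, Finset.mem_filter, Finset.mem_univ, true_and]
    exact fun j hj h => hmin j (h.trans hm) hj
  rw [← himage, lucky, Finset.card_image_of_injOn]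
  intro i hi j hj hij
  simp only [luckySet, Finset.coe_filter, Finset.mem_univ, true_and, Set.mem_ofPred_eq] at hi hj
  rcases lt_trichotomy i j with h | h | h
  · exact absurd hij (hj i h)
  · exact h
  · exact absurd hij.symm (hi j h)

/-- Every Fubini ranking is a parking function: there is an (injective)
outcome assignment `o` where car `i` parks at spot `o i`, the smallest unoccupied spot
`≥ α i` (every spot `s` with `α i ≤ s < o i` is occupied by an earlier car). Moreover a
car is lucky (parks in its preferred spot, `o i = α i`) iff it is the first occurrence of
its value, and hence the number of lucky cars equals the number of distinct values of `α`. -/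
theorem fubini_parks_and_lucky_first_occurrences
    (n : ℕ) (hn : 1 ≤ n) (α : Fin n → Fin n) (hα : IsFubini α) :
    ∃ o : Fin n → Fin n, Function.Injective o ∧
      (∀ i : Fin n, α i ≤ o i ∧ ∀ s : Fin n, α i ≤ s → s < o i → ∃ j, j < i ∧ o j = s) ∧
      (∀ i : Fin n, o i = α i ↔ ∀ j, j < i → α j ≠ α i) ∧
      (Finset.univ.filter (fun i => o i = α i)).card = (Finset.univ.image α).card := by
  refine ⟨parkingSpot α, parkingSpot_injective α, fun i => ⟨hα.le_parkingSpot i, fun s =>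
    hα.exists_lt_parkingSpot_eq⟩, hα.parkingSpot_eq_iff, ?_⟩
  simp only [hα.parkingSpot_eq_iff]
  exact lucky_eq_card_image α
end

section
/- For all n ≥ 1 and 1 ≤ k ≤ n, the number of weakly increasing Fubini rankings with n competitors having exactly k lucky cars equals the binomial coefficient C(n−1, k−1). Consequently, the total number of weakly increasing Fubini rankings with n competitors is |FR_n^↑| = 2^{n−1}. -/
open Finset

/-- In a weakly increasing Fubini ranking, the entries smaller than an occurring rank `α i`
are exactly those at the positions before `α i`. -/
theorem IsFubini.lt_iff {n : ℕ} {α : Fin n → Fin n} (hF : IsFubini α) (hM : Monotone α)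
    (i j : Fin n) : α j < α i ↔ j < α i := by
  have hc := hF (α i) ⟨i, rfl⟩
  constructor
  · intro h
    have hsub : Iic j ⊆ univ.filter (fun l => α l < α i) := fun l hl =>
      mem_filter.2 ⟨mem_univ _, (hM (mem_Iic.1 hl)).trans_lt h⟩
    have := card_le_card hsub
    rw [hc, Fin.card_Iic] at this
    exact Fin.lt_def.2 this
  · intro h
    by_contra hle
    have hsub : univ.filter (fun l => α l < α i) ⊆ Iio j := fun l hl =>
      mem_Iio.2 (hM.reflect_lt ((mem_filter.1 hl).2.trans_le (not_lt.1 hle)))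
    have := card_le_card hsub
    rw [hc, Fin.card_Iio] at this
    exact absurd (Fin.lt_def.1 h) (not_lt.2 this)

theorem isFubini_of_lt_iff {n : ℕ} {α : Fin n → Fin n}
    (h : ∀ i j, α j < α i ↔ j < α i) : IsFubini α := by
  rintro _ ⟨i, rfl⟩
  have : univ.filter (fun j => α j < α i) = Iio (α i) := by
    ext j
    simp [h i j]
  rw [this, Fin.card_Iio]

theorem IsFubini.apply_le {n : ℕ} {α : Fin n → Fin n} (hF : IsFubini α) (hM : Monotone α)
    (i : Fin n) : α i ≤ i :=
  not_lt.1 fun h => lt_irrefl _ ((hF.lt_iff hM i i).2 h)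

theorem IsFubini.apply_apply {n : ℕ} {α : Fin n → Fin n} (hF : IsFubini α) (hM : Monotone α)
    (i : Fin n) : α (α i) = α i :=
  le_antisymm (hF.apply_le hM _)
    (not_lt.1 fun h => lt_irrefl _ ((hF.lt_iff hM i (α i)).1 h))

/-- The lucky cars of a weakly increasing Fubini ranking are its fixed points. -/
theorem IsFubini.mem_luckySet {n : ℕ} {α : Fin n → Fin n} (hF : IsFubini α)
    (hM : Monotone α) (i : Fin n) : i ∈ luckySet α ↔ α i = i := by
  simp only [luckySet, mem_filter, mem_univ, true_and]
  constructor
  · intro h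
    by_contra hne
    exact h (α i) (lt_of_le_of_ne (hF.apply_le hM i) hne) (hF.apply_apply hM i)
  · intro h j hj
    exact ((hF.lt_iff hM i j).2 (h.symm ▸ hj)).ne

/-- The weakly increasing ranking in which every position `i` gets the largest element of `T`
that is at most `i`, or the first rank if there is none. -/
noncomputable def rankingOfStarts {m : ℕ} (T : Finset (Fin (m + 1))) (i : Fin (m + 1)) : Fin (m + 1) :=
  (T.filter (· ≤ i)).sup id

section rankingOfStarts

variable {m : ℕ} (T : Finset (Fin (m + 1)))

theorem rankingOfStarts_monotone : Monotone (rankingOfStarts T) := fun _ _ hij =>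
  sup_mono fun _ hl =>
    mem_filter.2 ⟨(mem_filter.1 hl).1, (mem_filter.1 hl).2.trans hij⟩

theorem rankingOfStarts_le (i : Fin (m + 1)) : rankingOfStarts T i ≤ i :=
  Finset.sup_le fun _ hl => (mem_filter.1 hl).2

variable {T} in
theorem le_rankingOfStarts {i t : Fin (m + 1)} (ht : t ∈ insert 0 T) (hti : t ≤ i) :
    t ≤ rankingOfStarts T i := by
  rcases mem_insert.1 ht with rfl | ht
  · exact Fin.zero_le _
  · exact le_sup (f := id) (mem_filter.2 ⟨ht, hti⟩)

theorem rankingOfStarts_mem (i : Fin (m + 1)) : rankingOfStarts T i ∈ insert 0 T := by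
  rcases (T.filter (· ≤ i)).eq_empty_or_nonempty with h | h
  · rw [rankingOfStarts, h, sup_empty]
    exact mem_insert_self 0 T
  · obtain ⟨t, ht, hsup⟩ := exists_mem_eq_sup _ h id
    rw [rankingOfStarts, hsup]
    exact mem_insert_of_mem (mem_filter.1 ht).1

theorem rankingOfStarts_isFubini : IsFubini (rankingOfStarts T) := by
  refine isFubini_of_lt_iff fun i j => ⟨fun h => ?_, (rankingOfStarts_le T j).trans_lt⟩
  by_contra hle
  exact absurd h (not_lt.2 (le_rankingOfStarts (rankingOfStarts_mem T i) (not_lt.1 hle)))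

theorem luckySet_rankingOfStarts : luckySet (rankingOfStarts T) = insert 0 T := by
  ext i
  rw [(rankingOfStarts_isFubini T).mem_luckySet (rankingOfStarts_monotone T)]
  exact ⟨fun h => h ▸ rankingOfStarts_mem T i,
    fun h => le_antisymm (rankingOfStarts_le T i) (le_rankingOfStarts h le_rfl)⟩

end rankingOfStarts

theorem zero_mem_luckySet {m : ℕ} (α : Fin (m + 1) → Fin (m + 1)) : 0 ∈ luckySet α := by
  simp [luckySet]

theorem IsFubini.rankingOfStarts_luckySet {m : ℕ} {α : Fin (m + 1) → Fin (m + 1)}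
    (hF : IsFubini α) (hM : Monotone α) : rankingOfStarts ((luckySet α).erase 0) = α := by
  funext i
  apply le_antisymm
  · refine Finset.sup_le fun t ht => ?_
    obtain ⟨ht, hti⟩ := mem_filter.1 ht
    have := (hF.mem_luckySet hM t).1 (mem_of_mem_erase ht)
    exact this.symm.trans_le (hM hti)
  · refine le_rankingOfStarts ?_ (hF.apply_le hM i)
    rw [insert_erase (zero_mem_luckySet α)]
    exact (hF.mem_luckySet hM _).2 (hF.apply_apply hM i)

/-- Weakly increasing Fubini rankings correspond to the sets of their lucky cars other than
the first car, which is always lucky. -/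
noncomputable def fubiniEquivStarts (m : ℕ) :
    {α : Fin (m + 1) → Fin (m + 1) // IsFubini α ∧ Monotone α} ≃
      {T : Finset (Fin (m + 1)) // T ∈ (univ.erase 0).powerset} where
  toFun α := ⟨(luckySet α.1).erase 0, mem_powerset.2 (erase_subset_erase _ (subset_univ _))⟩
  invFun T := ⟨rankingOfStarts T.1, rankingOfStarts_isFubini _, rankingOfStarts_monotone _⟩
  left_inv α := Subtype.ext (α.2.1.rankingOfStarts_luckySet α.2.2)
  right_inv T := Subtype.ext <| by
    have h0 : (0 : Fin (m + 1)) ∉ T.1 := fun h => by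
      simpa using mem_powerset.1 T.2 h
    simp only [luckySet_rankingOfStarts, erase_insert h0]

theorem card_fubini_lucky (m k : ℕ) :
    Nat.card {α : Fin (m + 1) → Fin (m + 1) // IsFubini α ∧ Monotone α ∧ lucky α = k + 1}
      = m.choose k := by
  have e : {α : Fin (m + 1) → Fin (m + 1) // IsFubini α ∧ Monotone α ∧ lucky α = k + 1} ≃
      {T : Finset (Fin (m + 1)) // T ∈ (univ.erase 0).powersetCard k} :=
    calc
      _ ≃ {α : {α : Fin (m + 1) → Fin (m + 1) // IsFubini α ∧ Monotone α} //
            lucky α.1 = k + 1} :=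
        (Equiv.subtypeEquivRight fun _ => and_assoc.symm).trans
          (Equiv.subtypeSubtypeEquivSubtypeInter _ fun α => lucky α = k + 1).symm
      _ ≃ {T : {T : Finset (Fin (m + 1)) // T ∈ (univ.erase 0).powerset} // T.1.card = k} :=
        (fubiniEquivStarts m).subtypeEquiv fun α => by
          have := card_erase_add_one (zero_mem_luckySet α.1)
          simp only [fubiniEquivStarts, lucky, Equiv.coe_fn_mk]
          omega
      _ ≃ _ :=
        (Equiv.subtypeSubtypeEquivSubtypeInter _ fun T : Finset (Fin (m + 1)) => T.card = k).trans
          (Equiv.subtypeEquivRight fun _ => by rw [mem_powersetCard, mem_powerset])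
  rw [Nat.card_congr e, Nat.card_eq_fintype_card, Fintype.card_coe, card_powersetCard]
  simp

theorem card_fubini (m : ℕ) :
    Nat.card {α : Fin (m + 1) → Fin (m + 1) // IsFubini α ∧ Monotone α} = 2 ^ m := by
  rw [Nat.card_congr (fubiniEquivStarts m), Nat.card_eq_fintype_card, Fintype.card_coe,
    card_powerset]
  simp

/-- For `1 ≤ k ≤ n`, the number of weakly increasing Fubini rankings
with `n` competitors having exactly `k` lucky cars is `C(n−1, k−1)`; consequently the
total number of weakly increasing Fubini rankings is `2^(n−1)`. -/
theorem card_weakly_increasing_fubini (n : ℕ) (hn : 1 ≤ n) :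
    (∀ k : ℕ, 1 ≤ k → k ≤ n →
      Nat.card {α : Fin n → Fin n // IsFubini α ∧ Monotone α ∧ lucky α = k}
        = Nat.choose (n - 1) (k - 1))
    ∧ Nat.card {α : Fin n → Fin n // IsFubini α ∧ Monotone α} = 2 ^ (n - 1) := by
  obtain ⟨m, rfl⟩ := Nat.exists_eq_add_of_le' hn
  refine ⟨fun k hk _ => ?_, card_fubini m⟩
  obtain ⟨l, rfl⟩ := Nat.exists_eq_add_of_le' hk
  exact card_fubini_lucky m l
end

section
/- Let n ≥ 1 and let I = {i_1, i_2, …, i_k} ⊆ [n] with 1 = i_1 < i_2 < ⋯ < i_k ≤ n, and set i_{k+1} = n+1. Then the number of Fubini rankings α with n competitors whose set of lucky cars is exactly I equals ∏_{ℓ=1}^{k} ℓ^{i_{ℓ+1} − i_ℓ}. -/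
open Finset

/-- The indices at which a finite sequence takes a value for the first time. -/
def firstOccurrences {n : ℕ} {β : Type*} [DecidableEq β] (g : Fin n → β) : Finset (Fin n) :=
  univ.filter fun m => ∀ j, j < m → g j ≠ g m

section FirstOccurrences

variable {n : ℕ} {β γ : Type*} [DecidableEq β] [DecidableEq γ]

theorem mem_firstOccurrences {g : Fin n → β} {m : Fin n} :
    m ∈ firstOccurrences g ↔ ∀ j, j < m → g j ≠ g m := by
  simp [firstOccurrences]

theorem firstOccurrences_congr {g : Fin n → β} {h : Fin n → γ}
    (H : ∀ j m, g j = g m ↔ h j = h m) : firstOccurrences g = firstOccurrences h := by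
  ext m
  simp [mem_firstOccurrences, H]

theorem exists_mem_firstOccurrences (g : Fin n → β) (m : Fin n) :
    ∃ j ∈ firstOccurrences g, g j = g m := by
  induction m using WellFoundedLT.induction with
  | ind m ih =>
    by_cases hm : m ∈ firstOccurrences g
    · exact ⟨m, hm, rfl⟩
    · simp only [mem_firstOccurrences, not_forall, not_not] at hm
      obtain ⟨j, hj, e⟩ := hm
      obtain ⟨l, hl, e'⟩ := ih j hj
      exact ⟨l, hl, e'.trans e⟩

theorem injOn_firstOccurrences (g : Fin n → β) :
    Set.InjOn g (firstOccurrences g : Set (Fin n)) := by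
  intro a ha b hb hab
  rw [mem_coe, mem_firstOccurrences] at ha hb
  rcases lt_trichotomy a b with h | h | h
  · exact absurd hab (hb a h)
  · exact h
  · exact absurd hab.symm (ha b h)

theorem image_firstOccurrences (g : Fin n → β) :
    (firstOccurrences g).image g = univ.image g := by
  ext x
  simp only [mem_image, mem_univ, true_and]
  constructor
  · rintro ⟨a, -, h⟩
    exact ⟨a, h⟩
  · rintro ⟨a, rfl⟩
    exact exists_mem_firstOccurrences g a

theorem card_image_univ_eq_card_firstOccurrences (g : Fin n → β) :
    (univ.image g).card = (firstOccurrences g).card := by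
  rw [← image_firstOccurrences, card_image_of_injOn (injOn_firstOccurrences g)]

end FirstOccurrences

theorem card_filter_fin_eq_count (P : ℕ → Prop) [DecidablePred P] (n : ℕ) :
    (univ.filter fun m : Fin n => P m).card = Nat.count P n := by
  rw [Nat.count_eq_card_filter_range, ← Fin.map_valEmbedding_univ.trans (Nat.Iio_eq_range n),
    filter_map, card_map]
  rfl

/-- Sequences of length `n + 1` with first occurrences prescribed by `P` are sequences of length
`n` of that kind together with a last entry that is new exactly when `P n` holds. -/
def prescribedSuccEquiv (P : ℕ → Prop) (β : Type*) (n : ℕ) :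
    {g : Fin (n + 1) → β // ∀ m, (∀ j, j < m → g j ≠ g m) ↔ P m} ≃
      Σ g : {g : Fin n → β // ∀ m, (∀ j, j < m → g j ≠ g m) ↔ P m},
        {x : β // (∀ j, g.1 j ≠ x) ↔ P n} where
  toFun g := ⟨⟨fun m => g.1 m.castSucc, fun m => by
    have := g.2 m.castSucc
    simpa [Fin.forall_fin_succ', (Fin.castSucc_lt_last m).le] using this⟩,
    ⟨g.1 (Fin.last n), by
      have := g.2 (Fin.last n)
      simpa [Fin.forall_fin_succ', Fin.castSucc_lt_last] using this⟩⟩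
  invFun p := ⟨Fin.snoc (α := fun _ => β) p.1.1 p.2.1, by
    intro m
    induction m using Fin.lastCases with
    | last =>
      have := p.2.2
      simpa [Fin.forall_fin_succ', Fin.castSucc_lt_last] using this
    | cast m =>
      have := p.1.2 m
      simpa [Fin.forall_fin_succ', (Fin.castSucc_lt_last m).le] using this⟩
  left_inv g := by
    ext m
    induction m using Fin.lastCases <;> simp
  right_inv p := by
    obtain ⟨⟨g, hg⟩, x, hx⟩ := p
    have hinit : (⟨fun m => Fin.snoc (α := fun _ => β) g x m.castSucc, by simpa using hg⟩ :
        {g : Fin n → β // ∀ m, (∀ j, j < m → g j ≠ g m) ↔ P m}) = ⟨g, hg⟩ := by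
      simp
    refine Sigma.ext hinit ((Subtype.heq_iff_coe_eq fun y => ?_).2 ?_)
    · simp
    · simp

theorem card_new_or_old_entry (P : ℕ → Prop) [DecidablePred P] (k n : ℕ) (g : Fin n → Fin k)
    (hg : ∀ m, (∀ j, j < m → g j ≠ g m) ↔ P m) :
    Nat.card {x : Fin k // (∀ j, g j ≠ x) ↔ P n} =
      if P n then k - Nat.count P n else Nat.count P n := by
  classical
  have hc : (univ.image g).card = Nat.count P n := by
    rw [card_image_univ_eq_card_firstOccurrences, ← card_filter_fin_eq_count]
    congr 1
    ext m
    simp [mem_firstOccurrences, ← hg]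
  rw [Nat.card_eq_fintype_card, Fintype.card_subtype]
  split_ifs with h
  · rw [← hc]
    refine Eq.trans ?_ ((card_compl _).trans (by rw [Fintype.card_fin]))
    congr 1
    ext x
    simp [h]
  · rw [← hc]
    congr 1
    ext x
    simp [h]

theorem card_prescribed_firstOccurrences (P : ℕ → Prop) [DecidablePred P] (k n : ℕ) :
    Nat.card {g : Fin n → Fin k // ∀ m, (∀ j, j < m → g j ≠ g m) ↔ P m} =
      k.descFactorial (Nat.count P n) *
        ∏ m ∈ range n, if P m then 1 else Nat.count P m := by
  classical
  induction n with
  | zero => simp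
  | succ n ih =>
    rw [Nat.card_congr (prescribedSuccEquiv P (Fin k) n), Nat.card_sigma]
    simp_rw [fun g : {g : Fin n → Fin k // ∀ m, (∀ j, j < m → g j ≠ g m) ↔ P m} =>
      card_new_or_old_entry P k n g.1 g.2]
    rw [sum_const, card_univ, ← Nat.card_eq_fintype_card, ih, prod_range_succ, Nat.count_succ]
    split_ifs
    · rw [Nat.descFactorial_succ, smul_eq_mul]
      ring
    · rw [smul_eq_mul, add_zero, mul_assoc]

theorem prod_count_succ (P : ℕ → Prop) [DecidablePred P] (n : ℕ) :
    ∏ m ∈ range n, Nat.count P (m + 1) =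
      (Nat.count P n).factorial * ∏ m ∈ range n, if P m then 1 else Nat.count P m := by
  induction n with
  | zero => simp
  | succ n ih =>
    rw [prod_range_succ, ih, prod_range_succ, Nat.count_succ]
    split_ifs
    · rw [Nat.factorial_succ]
      ring
    · rw [add_zero]
      ring

/-- The competition ranking induced by a scoring `g`: every index is sent to the number of
indices with a strictly smaller score. -/
def rankingOf {n k : ℕ} (g : Fin n → Fin k) (m : Fin n) : Fin n :=
  ⟨(univ.filter fun j => g j < g m).card, by
    conv_rhs => rw [← card_fin n]
    exact card_lt_card (filter_ssubset.2 ⟨m, mem_univ m, lt_irrefl _⟩)⟩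

theorem rankingOf_lt_iff {n k : ℕ} (g : Fin n → Fin k) (j m : Fin n) :
    rankingOf g j < rankingOf g m ↔ g j < g m := by
  change (univ.filter fun l => g l < g j).card < (univ.filter fun l => g l < g m).card ↔ _
  constructor
  · intro h
    by_contra! h'
    refine absurd h (not_lt.2 (card_le_card fun l hl => ?_))
    simp only [mem_filter, mem_univ, true_and] at hl ⊢
    exact hl.trans_le h'
  · intro h
    refine card_lt_card ((ssubset_iff_of_subset fun l hl => ?_).2 ⟨j, ?_, ?_⟩)
    · simp only [mem_filter, mem_univ, true_and] at hl ⊢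
      exact hl.trans h
    · simpa using h
    · simp

theorem isFubini_rankingOf {n k : ℕ} (g : Fin n → Fin k) : IsFubini (rankingOf g) := by
  rintro r ⟨m, rfl⟩
  simp only [rankingOf_lt_iff]
  rfl

/-- The number of elements of `I` with a smaller rank; for `I` the set of lucky cars this is
the number of distinct smaller ranks. -/
def smallerIn {n : ℕ} (I : Finset (Fin n)) (α : Fin n → Fin n) (m : Fin n) : ℕ :=
  (I.filter fun j => α j < α m).card

theorem smallerIn_lt_card {n : ℕ} {I : Finset (Fin n)} {α : Fin n → Fin n}
    (h : firstOccurrences α = I) (m : Fin n) : smallerIn I α m < I.card := by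
  subst h
  obtain ⟨j, hj, e⟩ := exists_mem_firstOccurrences α m
  exact card_lt_card (filter_ssubset.2 ⟨j, hj, by simp [e]⟩)

theorem smallerIn_lt_iff {n : ℕ} {I : Finset (Fin n)} {α : Fin n → Fin n}
    (h : firstOccurrences α = I) (j m : Fin n) :
    smallerIn I α j < smallerIn I α m ↔ α j < α m := by
  subst h
  constructor
  · intro h
    by_contra! h'
    refine absurd h (not_lt.2 (card_le_card fun l hl => ?_))
    simp only [mem_filter] at hl ⊢
    exact ⟨hl.1, hl.2.trans_le h'⟩
  · intro h
    obtain ⟨l, hl, e⟩ := exists_mem_firstOccurrences α j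
    refine card_lt_card ((ssubset_iff_of_subset fun l hl => ?_).2 ⟨l, ?_, ?_⟩)
    · simp only [mem_filter] at hl ⊢
      exact ⟨hl.1, hl.2.trans h⟩
    · simp [hl, e, h]
    · simp [e]

theorem card_filter_firstOccurrences_lt {n k : ℕ} (g : Fin n → Fin k)
    (hg : (firstOccurrences g).card = k) (m : Fin n) :
    ((firstOccurrences g).filter fun j => g j < g m).card = g m := by
  have himg : (firstOccurrences g).image g = univ := by
    rw [← card_eq_iff_eq_univ, card_image_of_injOn (injOn_firstOccurrences g), hg, Fintype.card_fin]
  rw [← Fin.card_Iio (g m),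
    ← card_image_of_injOn ((injOn_firstOccurrences g).mono (coe_subset.2 (filter_subset _ _)))]
  congr 1
  ext x
  have hx : x ∈ (firstOccurrences g).image g := himg ▸ mem_univ x
  obtain ⟨j, hj, rfl⟩ := mem_image.1 hx
  simp only [mem_image, mem_filter, mem_Iio]
  constructor
  · rintro ⟨l, ⟨-, hl⟩, e⟩
    exact e ▸ hl
  · exact fun h => ⟨j, ⟨hj, h⟩, rfl⟩

theorem eq_iff_eq_of_lt_iff_lt {ι β γ : Type*} [LinearOrder β] [LinearOrder γ] {f : ι → β}
    {g : ι → γ} (H : ∀ a b, f a < f b ↔ g a < g b) (a b : ι) : f a = f b ↔ g a = g b := by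
  rw [eq_iff_le_not_lt, eq_iff_le_not_lt, ← not_lt, ← not_lt, H, H]

/-- Fubini rankings with lucky set `I` correspond to sequences in `Fin (card I)` whose first
occurrences are exactly at `I`. -/
def fubiniEquiv {n k : ℕ} (I : Finset (Fin n)) (hI : I.card = k) :
    {α : Fin n → Fin n // IsFubini α ∧ luckySet α = I} ≃
      {g : Fin n → Fin k // firstOccurrences g = I} where
  toFun α := ⟨fun m => ⟨smallerIn I α.1 m, hI ▸ smallerIn_lt_card α.2.2 m⟩,
    (firstOccurrences_congr (eq_iff_eq_of_lt_iff_lt fun a b =>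
      Fin.mk_lt_mk.trans (smallerIn_lt_iff α.2.2 a b))).trans α.2.2⟩
  invFun g := ⟨rankingOf g.1, isFubini_rankingOf g.1,
    (firstOccurrences_congr (eq_iff_eq_of_lt_iff_lt (rankingOf_lt_iff g.1))).trans g.2⟩
  left_inv α := by
    ext m
    rw [← α.2.1 (α.1 m) ⟨m, rfl⟩]
    simp only [rankingOf, Fin.mk_lt_mk, smallerIn_lt_iff α.2.2]
  right_inv g := by
    ext m
    have hc : (firstOccurrences g.1).card = k := by rw [g.2, hI]
    conv_rhs => rw [← card_filter_firstOccurrences_lt g.1 hc m, g.2]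
    simp only [smallerIn, rankingOf_lt_iff]

theorem count_enumeration {k : ℕ} {i : ℕ → ℕ} {P : ℕ → Prop} [DecidablePred P]
    (hmono : ∀ a b : ℕ, 1 ≤ a → a < b → b ≤ k + 1 → i a < i b) (h1 : i 1 = 1)
    (hP : ∀ m, P m ↔ ∃ ℓ : ℕ, 1 ≤ ℓ ∧ ℓ ≤ k ∧ m + 1 = i ℓ) {ℓ t : ℕ} (hℓ : 1 ≤ ℓ) (hℓk : ℓ ≤ k)
    (ht : i ℓ ≤ t) (ht' : t < i (ℓ + 1)) : Nat.count P t = ℓ := by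
  have hpos : ∀ a, 1 ≤ a → a ≤ k → 1 ≤ i a := by
    intro a ha hak
    rcases ha.eq_or_lt with rfl | h
    · exact h1.ge
    · exact h1 ▸ (hmono 1 a le_rfl h (by omega)).le
  have hle : ∀ a b, 1 ≤ a → a ≤ b → b ≤ k + 1 → i a ≤ i b := by
    intro a b ha hab hb
    rcases hab.eq_or_lt with rfl | h
    · exact le_rfl
    · exact (hmono a b ha h hb).le
  have himg : (range t).filter P = (Icc 1 ℓ).image fun a => i a - 1 := by
    ext m
    simp only [mem_filter, mem_range, hP, mem_image, mem_Icc]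
    constructor
    · rintro ⟨hm, a, ha, hak, e⟩
      refine ⟨a, ⟨ha, ?_⟩, by omega⟩
      by_contra! h
      have := hle (ℓ + 1) a (by omega) h (by omega)
      omega
    · rintro ⟨a, ⟨ha, haℓ⟩, e⟩
      have := hle a ℓ ha haℓ (by omega)
      have := hpos a ha (by omega)
      exact ⟨by omega, a, ha, by omega, by omega⟩
  rw [Nat.count_eq_card_filter_range, himg, card_image_of_injOn, Nat.card_Icc,
    Nat.add_sub_cancel]
  intro a ha b hb hab
  simp only [coe_Icc, Set.mem_Icc] at ha hb hab
  have := hpos a ha.1 (by omega)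
  have := hpos b hb.1 (by omega)
  rcases lt_trichotomy a b with h | h | h
  · have := hmono a b ha.1 h (by omega)
    omega
  · exact h
  · have := hmono b a hb.1 h (by omega)
    omega

theorem prod_count_enumeration {k : ℕ} {i : ℕ → ℕ} {P : ℕ → Prop} [DecidablePred P]
    (hmono : ∀ a b : ℕ, 1 ≤ a → a < b → b ≤ k + 1 → i a < i b) (h1 : i 1 = 1)
    (hP : ∀ m, P m ↔ ∃ ℓ : ℕ, 1 ≤ ℓ ∧ ℓ ≤ k ∧ m + 1 = i ℓ) {l : ℕ} (hl : l ≤ k) :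
    ∏ t ∈ Ico 1 (i (l + 1)), Nat.count P t = ∏ ℓ ∈ Icc 1 l, ℓ ^ (i (ℓ + 1) - i ℓ) := by
  induction l with
  | zero => simp [h1]
  | succ l ih =>
    have hpos : 1 ≤ i (l + 1) := by
      rcases Nat.eq_zero_or_pos l with rfl | h
      · exact h1.ge
      · exact h1.ge.trans (hmono 1 (l + 1) le_rfl (by omega) (by omega)).le
    have hlt := hmono (l + 1) (l + 1 + 1) (by omega) (by omega) (by omega)
    rw [prod_Icc_succ_top (by omega), ← ih (by omega), ← prod_Ico_consecutive _ hpos hlt.le]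
    congr 1
    rw [← Nat.card_Ico]
    refine prod_eq_pow_card fun t ht => ?_
    rw [mem_Ico] at ht
    exact count_enumeration hmono h1 hP (by omega) hl ht.1 ht.2

/-- Let `I ⊆ [n]` with elements (as car numbers in `{1,…,n}`)
`1 = i_1 < i_2 < ⋯ < i_k`, and set `i_{k+1} = n+1`. Then the number of Fubini rankings
with `n` competitors whose lucky set is exactly `I` equals `∏_{ℓ=1}^k ℓ^(i_{ℓ+1} − i_ℓ)`.
Here a car index `m : Fin n` corresponds to the car number `m + 1`, and `i : ℕ → ℕ`
enumerates the car numbers of `I` in increasing order. -/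
theorem card_fubini_fixed_lucky_set (n k : ℕ) (hn : 1 ≤ n) (hk : 1 ≤ k)
    (I : Finset (Fin n)) (hI : I.card = k)
    (i : ℕ → ℕ)
    (hmono : ∀ a b : ℕ, 1 ≤ a → a < b → b ≤ k + 1 → i a < i b)
    (h1 : i 1 = 1) (hlast : i (k + 1) = n + 1)
    (hIdesc : ∀ m : Fin n, m ∈ I ↔ ∃ ℓ : ℕ, 1 ≤ ℓ ∧ ℓ ≤ k ∧ (m : ℕ) + 1 = i ℓ) :
    Nat.card {α : Fin n → Fin n // IsFubini α ∧ luckySet α = I}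
      = ∏ ℓ ∈ Finset.Icc 1 k, ℓ ^ (i (ℓ + 1) - i ℓ) := by
  classical
  let P : ℕ → Prop := fun m => ∃ ℓ : ℕ, 1 ≤ ℓ ∧ ℓ ≤ k ∧ m + 1 = i ℓ
  have hP : ∀ m, P m ↔ ∃ ℓ : ℕ, 1 ≤ ℓ ∧ ℓ ≤ k ∧ m + 1 = i ℓ := fun _ => Iff.rfl
  have hcount : Nat.count P n = k := by
    rw [← hI, ← card_filter_fin_eq_count]
    congr 1
    ext m
    simp [hIdesc, P]
  have hequiv : ∀ g : Fin n → Fin k,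
      firstOccurrences g = I ↔ ∀ m, (∀ j, j < m → g j ≠ g m) ↔ P m := by
    intro g
    rw [Finset.ext_iff]
    exact forall_congr' fun m => by rw [mem_firstOccurrences, hIdesc]
  rw [Nat.card_congr ((fubiniEquiv I hI).trans (Equiv.subtypeEquivRight hequiv)),
    card_prescribed_firstOccurrences, hcount, Nat.descFactorial_self,
    ← prod_count_enumeration hmono h1 hP le_rfl, hlast, prod_Ico_eq_prod_range]
  conv_lhs => rw [← hcount, ← prod_count_succ]
  simp [add_comm]
end

section
/- Let n ≥ 1 and let I ⊆ [n] be any subset with 1 ∈ I. Then there exists a unique weakly increasing Fubini ranking α ∈ FR_n^↑ whose set of lucky cars is exactly I (explicitly, writing I = {1 = i_1 < i_2 < ⋯ < i_k} and i_{k+1} = n+1, the unique such α is given by a_ℓ = i_j whenever i_j ≤ ℓ < i_{j+1}). -/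
/-- A lucky car of a weakly increasing Fubini ranking is assigned its own index. -/
theorem IsFubini.apply_eq_of_mem_luckySet {n : ℕ} {α : Fin n → Fin n} (hα : IsFubini α)
    (hmono : Monotone α) {i : Fin n} (hi : i ∈ luckySet α) : α i = i := by
  have hlucky : ∀ j, j < i → α j ≠ α i := by simpa [luckySet] using hi
  have hset : Finset.univ.filter (fun j => α j < α i) = Finset.Iio i := by
    ext j
    simp only [Finset.mem_filter, Finset.mem_univ, true_and, Finset.mem_Iio]
    exact ⟨hmono.reflect_lt, fun h => (hmono h.le).lt_of_ne (hlucky j h)⟩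
  have hcard := hα (α i) ⟨i, rfl⟩
  rw [hset, Fin.card_Iio] at hcard
  exact Fin.ext hcard.symm

/-- Every value of `α` is attained at a lucky car. -/
theorem exists_mem_luckySet_apply_eq {n : ℕ} (α : Fin n → Fin n) (i : Fin n) :
    ∃ j ∈ luckySet α, j ≤ i ∧ α j = α i := by
  induction i using WellFoundedLT.induction with
  | ind i ih =>
    by_cases hi : i ∈ luckySet α
    · exact ⟨i, hi, le_rfl, rfl⟩
    · obtain ⟨k, hki, hk⟩ : ∃ k, k < i ∧ α k = α i := by simpa [luckySet] using hi
      obtain ⟨j, hj, hjk, hjα⟩ := ih k hki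
      exact ⟨j, hj, hjk.trans hki.le, hjα.trans hk⟩

/-- A weakly increasing Fubini ranking sends each car to the last lucky car up to it. -/
theorem IsFubini.isGreatest_apply {n : ℕ} {α : Fin n → Fin n} (hα : IsFubini α)
    (hmono : Monotone α) (i : Fin n) :
    IsGreatest {k | k ∈ luckySet α ∧ k ≤ i} (α i) := by
  refine ⟨?_, fun k hk => ?_⟩
  · obtain ⟨j, hj, hji, hjα⟩ := exists_mem_luckySet_apply_eq α i
    rw [← hjα, hα.apply_eq_of_mem_luckySet hmono hj]
    exact ⟨hj, hji⟩
  · rw [← hα.apply_eq_of_mem_luckySet hmono hk.1]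
    exact hmono hk.2

/-- The map sending each car to the last element of `I` up to it is a weakly increasing
Fubini ranking with lucky set `I`. -/
theorem isFubini_monotone_luckySet_of_isGreatest {n : ℕ} {α : Fin n → Fin n}
    {I : Finset (Fin n)} (h : ∀ i, IsGreatest {k | k ∈ I ∧ k ≤ i} (α i)) :
    IsFubini α ∧ Monotone α ∧ luckySet α = I := by
  have hmem : ∀ i, α i ∈ I := fun i => (h i).1.1
  have hle : ∀ i, α i ≤ i := fun i => (h i).1.2
  have hge : ∀ {k i}, k ∈ I → k ≤ i → k ≤ α i := fun hk hki => (h _).2 ⟨hk, hki⟩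
  refine ⟨?_, fun i j hij => hge (hmem i) ((hle i).trans hij), ?_⟩
  · rintro _ ⟨i, rfl⟩
    have hset : Finset.univ.filter (fun j => α j < α i) = Finset.Iio (α i) := by
      ext j
      simp only [Finset.mem_filter, Finset.mem_univ, true_and, Finset.mem_Iio]
      exact ⟨fun hj => lt_of_not_ge fun hij => (hge (hmem i) hij).not_gt hj, (hle j).trans_lt⟩
    rw [hset, Fin.card_Iio]
  · ext i
    simp only [luckySet, Finset.mem_filter, Finset.mem_univ, true_and]
    refine ⟨fun hi => ?_, fun hi j hj => (((hle j).trans_lt hj).trans_le (hge hi le_rfl)).ne⟩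
    have hfix : α (α i) = α i := (hle _).antisymm (hge (hmem i) le_rfl)
    have heq : α i = i := (hle i).eq_of_not_lt fun hlt => hi _ hlt hfix
    exact heq ▸ hmem i

/-- For any `I ⊆ [n]` containing car `1` (index `0` in `Fin n`), there
exists a unique weakly increasing Fubini ranking with `n` competitors whose set of lucky
cars is exactly `I`. -/
theorem existsUnique_weakly_increasing_fubini_fixed_lucky_set
    (n : ℕ) (hn : 1 ≤ n) (I : Finset (Fin n)) (hI : (⟨0, hn⟩ : Fin n) ∈ I) :
    ∃! α : Fin n → Fin n, IsFubini α ∧ Monotone α ∧ luckySet α = I := by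
  have hex : ∀ i, ∃ m, IsGreatest {k | k ∈ I ∧ k ≤ i} m := fun i =>
    ⟨(I.filter (· ≤ i)).max' ⟨⟨0, hn⟩, Finset.mem_filter.2 ⟨hI, Nat.zero_le _⟩⟩, by
      simpa using (I.filter (· ≤ i)).isGreatest_max' _⟩
  choose α hα using hex
  refine ⟨α, isFubini_monotone_luckySet_of_isGreatest hα, ?_⟩
  rintro β ⟨hβ, hmono, rfl⟩
  exact funext fun i => (hβ.isGreatest_apply hmono i).unique (hα i)
end

section
/- For all n ≥ 1 and 1 ≤ k ≤ n, the number f_UFR(n,k) of unit Fubini rankings with n competitors having exactly k lucky cars satisfies 2^{n−k}·f_UFR(n,k) = n!·C(k, n−k), where C(k, n−k) is the binomial coefficient (equal to 0 when n−k > k); that is, f_UFR(n,k) = (n!/2^{n−k})·C(k, n−k). -/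
/-- `α` has every value occurring at most twice among its entries (the "unit" condition:
a unit Fubini ranking is a Fubini ranking in which at most two competitors share a rank). -/
def IsUnit2 {n : ℕ} (α : Fin n → Fin n) : Prop :=
  ∀ r : Fin n, (Finset.univ.filter (fun i => α i = r)).card ≤ 2

namespace UnitFubini

open Finset

variable {ι : Type*}

/-- `f` restricts to a unit Fubini ranking of `s` with exactly `k` distinct ranks, counted
from `0`, and vanishes outside `s`. -/
structure IsRanking (k : ℕ) (s : Finset ι) (f : ι → ℕ) : Prop where
  eq_zero : ∀ i ∉ s, f i = 0
  card_lt : ∀ i ∈ s, #{j ∈ s | f j < f i} = f i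
  card_eq_le : ∀ r, #{i ∈ s | f i = r} ≤ 2
  card_image : #(s.image f) = k

lemma IsRanking.lt_card {k : ℕ} {s : Finset ι} {f : ι → ℕ} (h : IsRanking k s f)
    {i : ι} (hi : i ∈ s) : f i < #s := by
  rw [← h.card_lt i hi]
  exact card_lt_card (filter_ssubset.2 ⟨i, hi, lt_irrefl _⟩)

lemma isRanking_zero_iff {s : Finset ι} {f : ι → ℕ} :
    IsRanking 0 s f ↔ s = ∅ ∧ f = 0 := by
  constructor
  · intro h
    have hs : s = ∅ := by simpa using h.card_image
    subst hs
    exact ⟨rfl, funext fun i => h.eq_zero i (by simp)⟩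
  · rintro ⟨rfl, rfl⟩
    constructor <;> simp

variable [DecidableEq ι]

/-- Put the block `t` on top of a ranking `g` of `s \ t`. -/
def addTop (s t : Finset ι) (g : ι → ℕ) : ι → ℕ :=
  fun i => if i ∈ t then #(s \ t) else g i

lemma IsRanking.addTop {k : ℕ} {s t : Finset ι} {g : ι → ℕ} (hts : t ⊆ s) (ht : t.Nonempty)
    (ht2 : #t ≤ 2) (h : IsRanking k (s \ t) g) : IsRanking (k + 1) s (addTop s t g) := by
  have hlt : ∀ i ∈ s, i ∉ t → g i < #(s \ t) := fun i hi hit =>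
    h.lt_card (mem_sdiff.2 ⟨hi, hit⟩)
  refine ⟨fun i hi => ?_, fun i hi => ?_, fun r => ?_, ?_⟩
  · have hit : i ∉ t := fun hit => hi (hts hit)
    simpa [UnitFubini.addTop, hit] using h.eq_zero i (by simp [hi])
  · by_cases hit : i ∈ t
    · simp only [UnitFubini.addTop, hit, if_true]
      congr 1
      ext j
      have := hlt j
      simp only [mem_filter, mem_sdiff]
      split_ifs <;> grind
    · simp only [UnitFubini.addTop, hit, if_false]
      conv_rhs => rw [← h.card_lt i (mem_sdiff.2 ⟨hi, hit⟩)]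
      congr 1
      ext j
      have := hlt i hi hit
      simp only [mem_filter, mem_sdiff]
      split_ifs <;> grind
  · by_cases hr : r = #(s \ t)
    · refine (card_le_card fun j hj => ?_).trans ht2
      have := hlt j
      rw [mem_filter] at hj
      by_contra hjt
      simp only [UnitFubini.addTop, hjt, if_false] at hj
      have := this hj.1 hjt
      omega
    · refine (card_le_card fun j hj => ?_).trans (h.card_eq_le r)
      rw [mem_filter] at hj ⊢
      simp only [UnitFubini.addTop, mem_sdiff] at hj ⊢
      split_ifs at hj <;> grind
  · have himg : s.image (UnitFubini.addTop s t g) =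
        insert (#(s \ t)) ((s \ t).image g) := by
      ext r
      obtain ⟨i, hi⟩ := ht
      simp only [mem_image, mem_insert, mem_sdiff, UnitFubini.addTop]
      constructor
      · rintro ⟨j, hj, rfl⟩
        split_ifs with hjt
        · exact Or.inl rfl
        · exact Or.inr ⟨j, ⟨hj, hjt⟩, rfl⟩
      · rintro (rfl | ⟨j, ⟨hj, hjt⟩, rfl⟩)
        · exact ⟨i, hts hi, if_pos hi⟩
        · exact ⟨j, hj, if_neg hjt⟩
    rw [himg, card_insert_of_notMem, h.card_image]
    intro hm
    obtain ⟨j, hj, hje⟩ := mem_image.1 hm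
    exact (h.lt_card hj).ne hje

lemma IsRanking.exists_addTop {k : ℕ} {s : Finset ι} {f : ι → ℕ} (h : IsRanking (k + 1) s f) :
    ∃ t ⊆ s, t.Nonempty ∧ #t ≤ 2 ∧ ∃ g, IsRanking k (s \ t) g ∧ UnitFubini.addTop s t g = f := by
  have hs : s.Nonempty := by
    rw [nonempty_iff_ne_empty]
    rintro rfl
    simpa using h.card_image
  obtain ⟨m, hm, hmax⟩ := s.exists_max_image f hs
  let t := {i ∈ s | f i = f m}
  have hts : t ⊆ s := filter_subset _ _
  have hmt : m ∈ t := by simp [t, hm]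
  have hsdiff : s \ t = {j ∈ s | f j < f m} := by
    ext j
    have := hmax j
    simp only [t, mem_sdiff, mem_filter]
    grind
  have hcard : #(s \ t) = f m := by rw [hsdiff, h.card_lt m hm]
  let g : ι → ℕ := fun i => if i ∈ t then 0 else f i
  have htop : UnitFubini.addTop s t g = f := by
    funext i
    by_cases hi : i ∈ t
    · simp only [UnitFubini.addTop, hi, if_true, hcard]
      exact (mem_filter.1 hi).2.symm
    · simp [UnitFubini.addTop, hi, g]
  have hgf : ∀ i ∈ s \ t, g i = f i := fun i hi => if_neg (mem_sdiff.1 hi).2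
  refine ⟨t, hts, ⟨m, hmt⟩, h.card_eq_le _, g, ⟨fun i hi => ?_, fun i hi => ?_, fun r => ?_, ?_⟩,
    htop⟩
  · by_cases hit : i ∈ t
    · exact if_pos hit
    · exact (if_neg hit).trans (h.eq_zero i fun his => hi (mem_sdiff.2 ⟨his, hit⟩))
  · conv_rhs => rw [hgf i hi, ← h.card_lt i (mem_sdiff.1 hi).1]
    congr 1
    ext j
    have := hgf j
    have := hgf i hi
    have := hmax i (mem_sdiff.1 hi).1
    grind
  · refine (card_le_card fun j hj => ?_).trans (h.card_eq_le r)
    obtain ⟨hj, hjr⟩ := mem_filter.1 hj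
    exact mem_filter.2 ⟨(mem_sdiff.1 hj).1, hgf j hj ▸ hjr⟩
  · have himg : s.image f = insert (f m) ((s \ t).image g) := by
      ext r
      simp only [mem_image, mem_insert]
      constructor
      · rintro ⟨j, hj, rfl⟩
        by_cases hjt : j ∈ t
        · exact Or.inl (mem_filter.1 hjt).2
        · exact Or.inr ⟨j, mem_sdiff.2 ⟨hj, hjt⟩, if_neg hjt⟩
      · rintro (rfl | ⟨j, hj, rfl⟩)
        · exact ⟨m, hm, rfl⟩
        · exact ⟨j, (mem_sdiff.1 hj).1, (hgf j hj).symm⟩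
    have hk := h.card_image
    rw [himg, card_insert_of_notMem] at hk
    · omega
    · intro hmem
      obtain ⟨j, hj, hje⟩ := mem_image.1 hmem
      rw [hgf j hj] at hje
      rw [hsdiff] at hj
      exact (mem_filter.1 hj).2.ne hje

lemma filter_addTop_eq {k : ℕ} {s t : Finset ι} {g : ι → ℕ} (hts : t ⊆ s) (ht : t.Nonempty)
    (h : IsRanking k (s \ t) g) :
    {i ∈ s | ∀ j ∈ s, addTop s t g j ≤ addTop s t g i} = t := by
  have hlt : ∀ i ∈ s, i ∉ t → g i < #(s \ t) := fun i hi hit =>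
    h.lt_card (mem_sdiff.2 ⟨hi, hit⟩)
  obtain ⟨m, hm⟩ := ht
  ext i
  rw [mem_filter]
  simp only [addTop]
  constructor
  · rintro ⟨hi, hmax⟩
    by_contra hit
    have := hmax m (hts hm)
    simp only [hm, hit, if_true, if_false] at this
    exact (hlt i hi hit).not_ge this
  · refine fun hi => ⟨hts hi, fun j hj => ?_⟩
    simp only [hi, if_true]
    split_ifs with hjt
    · exact le_rfl
    · exact (hlt j hj hjt).le

lemma addTop_injOn {k : ℕ} {s t : Finset ι} :
    Set.InjOn (addTop s t) {g | IsRanking k (s \ t) g} := by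
  intro g hg g' hg' heq
  funext i
  by_cases hi : i ∈ t
  · rw [IsRanking.eq_zero hg i (by simp [hi]), IsRanking.eq_zero hg' i (by simp [hi])]
  · simpa [addTop, hi] using congrFun heq i

variable [Fintype ι]

/-- The finite set of rankings of `s` with `k` distinct ranks, built by adding top blocks. -/
def rankings : ℕ → Finset ι → Finset (ι → ℕ)
  | 0, s => if s = ∅ then {0} else ∅
  | k + 1, s => (s.powersetCard 1 ∪ s.powersetCard 2).biUnion
      fun t => (rankings k (s \ t)).image (addTop s t)

lemma mem_rankings {k : ℕ} {s : Finset ι} {f : ι → ℕ} :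
    f ∈ rankings k s ↔ IsRanking k s f := by
  induction k generalizing s f with
  | zero =>
    rw [isRanking_zero_iff, rankings]
    split_ifs with hs <;> simp [hs]
  | succ k ih =>
    simp only [rankings, mem_biUnion, mem_union, mem_powersetCard, mem_image, ih]
    constructor
    · rintro ⟨t, ht, g, hg, rfl⟩
      exact hg.addTop (by tauto) (card_pos.1 (by omega)) (by omega)
    · intro h
      obtain ⟨t, hts, ht, ht2, g, hg, rfl⟩ := h.exists_addTop
      have := ht.card_pos
      refine ⟨t, ?_, g, hg, rfl⟩
      simp only [hts, true_and]
      omega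

lemma card_rankings_succ (k : ℕ) (s : Finset ι) :
    #(rankings (k + 1) s) = ∑ t ∈ s.powersetCard 1, #(rankings k (s \ t)) +
      ∑ t ∈ s.powersetCard 2, #(rankings k (s \ t)) := by
  rw [rankings, card_biUnion, ← sum_union]
  · refine sum_congr rfl fun t _ => card_image_of_injOn ?_
    exact addTop_injOn.mono fun g hg => mem_rankings.1 hg
  · rw [disjoint_left]
    intro t h1 h2
    rw [mem_powersetCard] at h1 h2
    omega
  · intro t ht t' ht' hne
    refine disjoint_left.2 fun f hf hf' => ?_
    obtain ⟨g, hg, rfl⟩ := mem_image.1 hf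
    obtain ⟨g', hg', heq⟩ := mem_image.1 hf'
    simp only [coe_union, Set.mem_union, mem_coe, mem_powersetCard] at ht ht'
    apply hne
    rw [← filter_addTop_eq (by tauto) (card_pos.1 (by omega)) (mem_rankings.1 hg),
      ← filter_addTop_eq (t := t') (by tauto) (card_pos.1 (by omega)) (mem_rankings.1 hg'), heq]

lemma card_rankings_eq_zero {k : ℕ} {s : Finset ι} (h : #s < k) : #(rankings k s) = 0 := by
  rw [card_eq_zero, eq_empty_iff_forall_notMem]
  intro f hf
  have := (mem_rankings.1 hf).card_image
  have := card_image_le (s := s) (f := f)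
  omega

lemma two_pow_mul_card_rankings (k j : ℕ) (s : Finset ι) (hs : #s = k + j) :
    2 ^ j * #(rankings k s) = (k + j).factorial * k.choose j := by
  induction k generalizing j s with
  | zero =>
    rw [rankings]
    cases j with
    | zero => simp [card_eq_zero.1 hs]
    | succ j =>
      have : s ≠ ∅ := by
        rintro rfl
        simp at hs
      simp [this]
  | succ k ih =>
    have hsd : ∀ b, ∀ t ∈ s.powersetCard b, #(s \ t) = k + 1 + j - b := by
      intro b t ht
      rw [mem_powersetCard] at ht
      rw [card_sdiff_of_subset ht.1, hs, ht.2]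
    have hone : 2 ^ j * ∑ t ∈ s.powersetCard 1, #(rankings k (s \ t)) =
        (k + 1 + j).factorial * k.choose j := by
      rw [mul_sum, sum_congr rfl fun t ht => ih j (s \ t) (by rw [hsd 1 t ht]; omega),
        sum_const, card_powersetCard, hs, Nat.choose_one_right, smul_eq_mul, ← mul_assoc,
        show k + 1 + j = k + j + 1 by ring, Nat.factorial_succ]
    rw [card_rankings_succ, mul_add, hone]
    cases j with
    | zero =>
      rw [sum_eq_zero fun t ht => card_rankings_eq_zero ?_]
      · simp
      · have := hsd 2 t ht
        have := card_le_card (mem_powersetCard.1 ht).1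
        have := (mem_powersetCard.1 ht).2
        omega
    | succ j =>
      have htwo : 2 ^ j * ∑ t ∈ s.powersetCard 2, #(rankings k (s \ t)) =
          (k + j + 2).choose 2 * ((k + j).factorial * k.choose j) := by
        rw [mul_sum, sum_congr rfl fun t ht => ih j (s \ t) (by rw [hsd 2 t ht]; omega),
          sum_const, card_powersetCard, hs, smul_eq_mul, show k + 1 + (j + 1) = k + j + 2 by ring]
      have hchoose : (k + j + 2).choose 2 * 2 = (k + j + 2) * (k + j + 1) := by
        rw [Nat.choose_two_right]
        exact Nat.div_mul_cancel (even_iff_two_dvd.1 (Nat.even_mul_pred_self _))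
      rw [pow_succ', mul_assoc, htwo, Nat.choose_succ_succ k j,
        show k + 1 + (j + 1) = k + j + 1 + 1 by ring, Nat.factorial_succ, Nat.factorial_succ]
      linear_combination (k + j).factorial * k.choose j * hchoose

lemma lucky_eq_card_image {n : ℕ} (α : Fin n → Fin n) : lucky α = #(univ.image α) := by
  have himg : (luckySet α).image α = univ.image α := by
    refine (image_subset_image (subset_univ _)).antisymm fun r hr => ?_
    obtain ⟨i, -, rfl⟩ := mem_image.1 hr
    obtain ⟨m, hm, hmin⟩ := ({j | α j = α i} : Finset (Fin n)).exists_min_image id ⟨i, by simp⟩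
    simp only [mem_filter, mem_univ, true_and, id] at hm hmin
    refine mem_image.2 ⟨m, ?_, hm⟩
    simp only [luckySet, mem_filter, mem_univ, true_and]
    exact fun j hj he => (hmin j (he.trans hm)).not_gt hj
  rw [← himg, card_image_of_injOn, lucky]
  intro i hi j hj hij
  simp only [luckySet, coe_filter, mem_univ, true_and, Set.mem_ofPred_eq] at hi hj
  by_contra hne
  rcases lt_or_gt_of_ne hne with h | h
  · exact hj i h hij
  · exact hi j h hij.symm

lemma isRanking_val_iff {n k : ℕ} (α : Fin n → Fin n) :
    IsRanking k univ (fun i => (α i : ℕ)) ↔ IsFubini α ∧ IsUnit2 α ∧ lucky α = k := by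
  have himg : #(univ.image fun i => (α i : ℕ)) = lucky α := by
    rw [lucky_eq_card_image, ← card_image_of_injective (univ.image α) Fin.val_injective,
      image_image]
    rfl
  constructor
  · intro h
    refine ⟨?_, fun r => ?_, himg.symm.trans h.card_image⟩
    · rintro r ⟨i, rfl⟩
      exact h.card_lt i (mem_univ i)
    · simpa only [Fin.ext_iff] using h.card_eq_le r
  · rintro ⟨hF, hU, hk⟩
    refine ⟨by simp, fun i _ => hF _ ⟨i, rfl⟩, fun r => ?_, himg.trans hk⟩
    by_cases hr : r < n
    · simpa only [Fin.ext_iff] using hU ⟨r, hr⟩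
    · rw [filter_eq_empty_iff.2]
      · simp
      · intro i _
        have := (α i).isLt
        omega

lemma card_subtype_eq_card_rankings (n k : ℕ) :
    Nat.card {α : Fin n → Fin n // IsFubini α ∧ IsUnit2 α ∧ lucky α = k} =
      #(rankings k (univ : Finset (Fin n))) := by
  rw [← Nat.card_eq_finsetCard]
  refine Nat.card_congr (Equiv.ofBijective
    (fun α => ⟨fun i => (α.1 i : ℕ), mem_rankings.2 ((isRanking_val_iff α.1).2 α.2)⟩) ⟨?_, ?_⟩)
  · intro α β h
    ext i
    exact congrFun (Subtype.ext_iff.1 h) i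
  · rintro ⟨f, hf⟩
    have hf' := mem_rankings.1 hf
    have hlt : ∀ i, f i < n := fun i => by simpa using hf'.lt_card (mem_univ i)
    exact ⟨⟨fun i => ⟨f i, hlt i⟩, (isRanking_val_iff _).1 hf'⟩, rfl⟩

end UnitFubini

/-- For `1 ≤ k ≤ n`, the number `f_UFR(n,k)` of unit Fubini rankings
with `n` competitors having exactly `k` lucky cars satisfies
`2^(n−k) · f_UFR(n,k) = n! · C(k, n−k)`. -/
theorem card_unit_fubini_lucky (n k : ℕ) (hn : 1 ≤ n) (hk : 1 ≤ k) (hkn : k ≤ n) :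
    2 ^ (n - k) *
        Nat.card {α : Fin n → Fin n // IsFubini α ∧ IsUnit2 α ∧ lucky α = k}
      = Nat.factorial n * Nat.choose k (n - k) := by
  obtain ⟨j, rfl⟩ := Nat.exists_eq_add_of_le hkn
  rw [UnitFubini.card_subtype_eq_card_rankings, Nat.add_sub_cancel_left]
  exact UnitFubini.two_pow_mul_card_rankings k j _ (by simp)
end

section
/- For every integer n ≥ 0 and every real number x with 1 + 4x > 0, one has ∑_{k=0}^{⌊n/2⌋} x^k·C(n−k, k) = (1/√(1+4x))·( ((1 + √(1+4x))/2)^{n+1} − ((1 − √(1+4x))/2)^{n+1} ), where C(n−k,k) denotes the binomial coefficient. -/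
/-- The weighted sums of binomial coefficients along antidiagonals satisfy a Fibonacci-type
recurrence. -/
lemma sum_antidiagonal_pow_mul_choose_add_two {R : Type*} [CommSemiring R] (x : R) (n : ℕ) :
    ∑ p ∈ Finset.HasAntidiagonal.antidiagonal (n + 2), x ^ p.2 * (Nat.choose p.1 p.2 : R)
      = ∑ p ∈ Finset.HasAntidiagonal.antidiagonal (n + 1), x ^ p.2 * (Nat.choose p.1 p.2 : R)
        + x * ∑ p ∈ Finset.HasAntidiagonal.antidiagonal n, x ^ p.2 * (Nat.choose p.1 p.2 : R) := by
  rw [Finset.Nat.antidiagonal_succ_succ', Finset.Nat.antidiagonal_succ']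
  simp [Nat.choose_succ_succ, mul_add, Finset.sum_add_distrib, Finset.mul_sum, pow_succ', mul_assoc]
  ring

/-- Terms with `k > n / 2` vanish, so the sum over `k ≤ n / 2` is the full antidiagonal sum. -/
lemma sum_range_pow_mul_choose_eq_sum_antidiagonal {R : Type*} [CommSemiring R] (x : R) (n : ℕ) :
    ∑ k ∈ Finset.range (n / 2 + 1), x ^ k * (Nat.choose (n - k) k : R)
      = ∑ p ∈ Finset.HasAntidiagonal.antidiagonal n, x ^ p.2 * (Nat.choose p.1 p.2 : R) := by
  rw [← Finset.Nat.sum_antidiagonal_swap, Finset.Nat.sum_antidiagonal_eq_sum_range_succ_mk]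
  refine Finset.sum_subset (Finset.range_subset_range.2 (by omega)) fun k _ hk => ?_
  rw [Finset.mem_range] at hk
  simp [Nat.choose_eq_zero_of_lt (show n - k < k by omega)]

/-- Binet-type formula for the antidiagonal sums, in terms of the roots `a`, `b` of
`t ^ 2 = t + x`. -/
lemma sub_mul_sum_antidiagonal_pow_mul_choose {R : Type*} [CommRing R] {a b x : R}
    (hadd : a + b = 1) (hmul : a * b = -x) (n : ℕ) :
    (a - b) * ∑ p ∈ Finset.HasAntidiagonal.antidiagonal n, x ^ p.2 * (Nat.choose p.1 p.2 : R)
      = a ^ (n + 1) - b ^ (n + 1) := by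
  obtain rfl : b = 1 - a := by linear_combination hadd
  obtain rfl : x = -(a * (1 - a)) := by rw [hmul, neg_neg]
  induction n using Nat.twoStepInduction with
  | zero => simp
  | one => simp [Finset.Nat.antidiagonal_succ]; ring
  | more n ih₀ ih₁ =>
    rw [sum_antidiagonal_pow_mul_choose_add_two]
    linear_combination ih₁ - a * (1 - a) * ih₀

/-- For every integer `n ≥ 0` and real `x` with `1 + 4x > 0`,
`∑_{k=0}^{⌊n/2⌋} xᵏ·C(n−k,k)
  = (1/√(1+4x))·(((1+√(1+4x))/2)^(n+1) − ((1−√(1+4x))/2)^(n+1))`. -/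
theorem sum_binomial_diagonal_closed_form (n : ℕ) (x : ℝ) (hx : 1 + 4 * x > 0) :
    ∑ k ∈ Finset.range (n / 2 + 1), x ^ k * (Nat.choose (n - k) k : ℝ)
      = (1 / Real.sqrt (1 + 4 * x)) *
          (((1 + Real.sqrt (1 + 4 * x)) / 2) ^ (n + 1)
            - ((1 - Real.sqrt (1 + 4 * x)) / 2) ^ (n + 1)) := by
  have hsqrt : Real.sqrt (1 + 4 * x) ≠ 0 := (Real.sqrt_pos.2 hx).ne'
  have hsq : Real.sqrt (1 + 4 * x) ^ 2 = 1 + 4 * x := Real.sq_sqrt hx.le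
  rw [sum_range_pow_mul_choose_eq_sum_antidiagonal,
    ← sub_mul_sum_antidiagonal_pow_mul_choose (x := x) (by ring) (by linear_combination -hsq / 4)]
  field_simp
  ring
end

section
/- For every n ≥ 1, the number of weakly increasing unit Fubini rankings with n competitors equals the Fibonacci number F_{n+1}, where F_1 = F_2 = 1 and F_{m+1} = F_m + F_{m−1}. -/
/-- A weakly increasing unit Fubini ranking is a sequence of singleton blocks `i ↦ i` and blocks
of length two `i, i + 1 ↦ i`. -/
theorem isFubini_isUnit2_monotone_iff {n : ℕ} (α : Fin n → Fin n) :
    (IsFubini α ∧ IsUnit2 α ∧ Monotone α) ↔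
      ∀ i, α i = i ∨ ((α i : ℕ) + 1 = i ∧ α (α i) = α i) := by
  constructor
  · rintro ⟨hF, hU, hM⟩ i
    have hcard := hF (α i) ⟨i, rfl⟩
    have hle : α i ≤ i := by
      have hsub : Finset.univ.filter (fun j => α j < α i) ⊆ Finset.Iio i := by
        intro j hj
        simp only [Finset.mem_filter, Finset.mem_univ, true_and] at hj
        exact Finset.mem_Iio.2 (hM.reflect_lt hj)
      have := Finset.card_le_card hsub
      rw [hcard, Fin.card_Iio] at this
      exact this
    have hfix : α (α i) = α i := by
      refine le_antisymm (hM hle) (not_lt.1 fun hlt => ?_)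
      have hsub : Finset.Iic (α i) ⊆ Finset.univ.filter (fun j => α j < α i) := by
        intro j hj
        simp only [Finset.mem_filter, Finset.mem_univ, true_and]
        exact (hM (Finset.mem_Iic.1 hj)).trans_lt hlt
      have := Finset.card_le_card hsub
      rw [hcard, Fin.card_Iic] at this
      omega
    by_cases h0 : α i = i
    · exact Or.inl h0
    refine Or.inr ⟨?_, hfix⟩
    have hlt : (α i : ℕ) < i := Fin.lt_def.1 (lt_of_le_of_ne hle h0)
    by_contra hne
    have hsub : Finset.Icc (α i) i ⊆ Finset.univ.filter (fun j => α j = α i) := by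
      intro j hj
      rw [Finset.mem_Icc] at hj
      simp only [Finset.mem_filter, Finset.mem_univ, true_and]
      exact le_antisymm (hM hj.2) (hfix ▸ hM hj.1)
    have h2 := (Finset.card_le_card hsub).trans (hU (α i))
    rw [Fin.card_Icc] at h2
    omega
  · intro h
    have hM : Monotone α := by
      intro i j hij
      rcases hij.eq_or_lt with rfl | hlt
      · exact le_rfl
      have hi := h i
      have hj := h j
      simp only [Fin.ext_iff, Fin.le_def, Fin.lt_def] at *
      omega
    refine ⟨?_, ?_, hM⟩
    · rintro r ⟨i, rfl⟩
      have hfix : α (α i) = α i := by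
        rcases h i with hi | hi
        · rw [hi, hi]
        · exact hi.2
      have heq : Finset.univ.filter (fun j => α j < α i) = Finset.Iio (α i) := by
        ext j
        simp only [Finset.mem_filter, Finset.mem_univ, true_and, Finset.mem_Iio]
        refine ⟨fun hj => hM.reflect_lt (hfix.symm ▸ hj), fun hj => ?_⟩
        have hj' := h j
        simp only [Fin.ext_iff, Fin.lt_def] at *
        omega
      rw [heq, Fin.card_Iio]
    · intro r
      rw [← Finset.card_map Fin.valEmbedding]
      refine (Finset.card_le_card (t := {(r : ℕ), (r : ℕ) + 1}) ?_).trans Finset.card_le_two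
      intro x hx
      simp only [Finset.mem_map, Finset.mem_filter, Finset.mem_univ, true_and,
        Fin.valEmbedding_apply] at hx
      obtain ⟨i, rfl, rfl⟩ := hx
      have hi := h i
      simp only [Fin.ext_iff, Finset.mem_insert, Finset.mem_singleton] at *
      omega

/-- The subsets of `{1, …, n - 1}` without two consecutive elements. -/
def sparseSubsets : ℕ → Finset (Finset ℕ)
  | 0 => {∅}
  | 1 => {∅}
  | n + 2 => sparseSubsets (n + 1) ∪ (sparseSubsets n).image (insert (n + 1))

theorem mem_sparseSubsets (n : ℕ) (s : Finset ℕ) :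
    s ∈ sparseSubsets n ↔ (∀ i ∈ s, 0 < i ∧ i < n) ∧ ∀ i ∈ s, i + 1 ∉ s := by
  induction n using Nat.twoStepInduction generalizing s with
  | zero =>
    simp only [sparseSubsets, Finset.mem_singleton]
    refine ⟨by rintro rfl; simp, fun h => Finset.eq_empty_of_forall_notMem fun i hi => ?_⟩
    have := h.1 i hi
    omega
  | one =>
    simp only [sparseSubsets, Finset.mem_singleton]
    refine ⟨by rintro rfl; simp, fun h => Finset.eq_empty_of_forall_notMem fun i hi => ?_⟩
    have := h.1 i hi
    omega
  | more n ih0 ih1 =>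
    simp only [sparseSubsets, Finset.mem_union, Finset.mem_image, ih0, ih1]
    constructor
    · rintro (⟨h1, h2⟩ | ⟨t, ⟨h1, h2⟩, rfl⟩)
      · exact ⟨fun i hi => ⟨(h1 i hi).1, (h1 i hi).2.trans (Nat.lt_succ_self _)⟩, h2⟩
      · grind
    · rintro ⟨h1, h2⟩
      by_cases hn : n + 1 ∈ s
      · refine Or.inr ⟨s.erase (n + 1), ⟨?_, by grind⟩, Finset.insert_erase hn⟩
        intro i hi
        have hne : i ≠ n := by
          rintro rfl
          exact h2 i (Finset.mem_of_mem_erase hi) hn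
        grind
      · refine Or.inl ⟨fun i hi => ?_, h2⟩
        have hne : i ≠ n + 1 := by
          rintro rfl
          exact hn hi
        have := h1 i hi
        omega

theorem card_sparseSubsets (n : ℕ) : (sparseSubsets n).card = Nat.fib (n + 1) := by
  induction n using Nat.twoStepInduction with
  | zero => rfl
  | one => rfl
  | more n ih0 ih1 =>
    have hnotMem {m : ℕ} {s : Finset ℕ} (hs : s ∈ sparseSubsets m) {k : ℕ} (hk : m ≤ k) :
        k ∉ s := fun hks => by
      have := ((mem_sparseSubsets m s).1 hs).1 k hks
      omega
    rw [sparseSubsets, Finset.card_union_of_disjoint, Finset.card_image_of_injOn, ih0, ih1,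
      Nat.fib_add_two (n := n + 1), add_comm]
    · intro s hs t ht hst
      rw [← Finset.erase_insert (hnotMem hs n.le_succ), ← Finset.erase_insert (hnotMem ht n.le_succ)]
      exact congrArg (fun u => Finset.erase u (n + 1)) hst
    · refine Finset.disjoint_left.2 fun s hs hs' => ?_
      obtain ⟨t, -, rfl⟩ := Finset.mem_image.1 hs'
      exact hnotMem hs le_rfl (Finset.mem_insert_self _ _)

/-- A ranking made of blocks of length one and two is determined by the set of positions that
end a block of length two. -/
def blocksEquivSparseSubsets (n : ℕ) :
    {α : Fin n → Fin n // ∀ i, α i = i ∨ ((α i : ℕ) + 1 = i ∧ α (α i) = α i)} ≃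
      sparseSubsets n where
  toFun α := ⟨(Finset.univ.filter fun i => α.1 i ≠ i).map Fin.valEmbedding, by
    obtain ⟨α, h⟩ := α
    simp only [mem_sparseSubsets, Finset.mem_map, Finset.mem_filter, Finset.mem_univ, true_and,
      Fin.valEmbedding_apply]
    constructor
    · rintro _ ⟨i, hi, rfl⟩
      have := (h i).resolve_left hi
      omega
    · rintro _ ⟨i, hi, rfl⟩ ⟨j, hj, hji⟩
      obtain ⟨h1, h2⟩ := (h j).resolve_left hj
      have hij : α j = i := Fin.ext (by omega)
      exact hi (hij ▸ h2)⟩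
  invFun s := ⟨fun i => if (i : ℕ) ∈ s.1 then ⟨i - 1, by omega⟩ else i, by
    obtain ⟨s, hs⟩ := s
    obtain ⟨h1, h2⟩ := (mem_sparseSubsets n s).1 hs
    intro i
    by_cases hi : (i : ℕ) ∈ s
    · have hpos := (h1 i hi).1
      have hpred : (i : ℕ) - 1 ∉ s := fun hmem =>
        h2 _ hmem (by rwa [Nat.sub_add_cancel hpos])
      refine Or.inr ?_
      simp only [hi, if_true, hpred, if_false, and_true]
      omega
    · simp [hi]⟩
  left_inv α := by
    obtain ⟨α, h⟩ := α
    refine Subtype.ext (funext fun i => ?_)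
    have hmem : (i : ℕ) ∈ (Finset.univ.filter fun i => α i ≠ i).map Fin.valEmbedding ↔
        α i ≠ i := by
      simp [← Fin.ext_iff]
    simp only [hmem]
    split_ifs with hi
    · have := (h i).resolve_left hi
      exact Fin.ext (by simp only; omega)
    · exact (not_not.1 hi).symm
  right_inv s := by
    obtain ⟨s, hs⟩ := s
    obtain ⟨h1, h2⟩ := (mem_sparseSubsets n s).1 hs
    refine Subtype.ext (Finset.ext fun x => ?_)
    simp only [Finset.mem_map, Finset.mem_filter, Finset.mem_univ, true_and,
      Fin.valEmbedding_apply]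
    constructor
    · rintro ⟨i, hi, rfl⟩
      by_contra hmem
      simp [hmem] at hi
    · intro hx
      have hb := h1 x hx
      refine ⟨⟨x, hb.2⟩, ?_, rfl⟩
      simp only [hx, if_true, ne_eq, Fin.mk.injEq]
      omega

/-- The number of weakly increasing unit Fubini rankings with `n ≥ 1`
competitors equals the Fibonacci number `F_{n+1}` (with `F₁ = F₂ = 1`; in Mathlib's
convention `Nat.fib 1 = Nat.fib 2 = 1`). -/
theorem card_weakly_increasing_unit_fubini (n : ℕ) (hn : 1 ≤ n) :
    Nat.card {α : Fin n → Fin n // IsFubini α ∧ IsUnit2 α ∧ Monotone α}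
      = Nat.fib (n + 1) := by
  rw [Nat.card_congr ((Equiv.subtypeEquivRight isFubini_isUnit2_monotone_iff).trans
    (blocksEquivSparseSubsets n)), Nat.card_eq_fintype_card, Fintype.card_coe,
    card_sparseSubsets]
end

section
/- Fix a real number q > 0 and set λ₁ = (q + √(q² + 4q))/2 and λ₂ = (q − √(q² + 4q))/2. Then for every real number x, the series ∑_{n≥0} S_n(q)·x^n/n!, where S_n(q) = ∑_{k=0}^{n} C(k, n−k)·q^k, converges and equals (λ₁·e^{λ₁ x} − λ₂·e^{λ₂ x})/(λ₁ − λ₂). (For n ≥ 1, S_n(q) is the lucky-count generating polynomial of weakly increasing unit Fubini rankings with n competitors, since the number of such rankings with exactly k lucky cars is C(k, n−k).) -/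
/-- The sums `Sₙ = ∑ₖ C(k, n - k) qᵏ` satisfy `Sₙ₊₂ = q Sₙ₊₁ + q Sₙ`. -/
theorem sum_choose_sub_mul_pow_add_two {R : Type*} [CommSemiring R] (q : R) (n : ℕ) :
    ∑ k ∈ Finset.range (n + 3), (Nat.choose k (n + 2 - k) : R) * q ^ k =
      q * ∑ k ∈ Finset.range (n + 2), (Nat.choose k (n + 1 - k) : R) * q ^ k +
        q * ∑ k ∈ Finset.range (n + 1), (Nat.choose k (n - k) : R) * q ^ k := by
  have pascal : ∀ k ∈ Finset.range (n + 1),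
      (Nat.choose (k + 1) (n + 2 - (k + 1)) : R) * q ^ (k + 1) =
        q * ((Nat.choose k (n + 1 - k) : R) * q ^ k) + q * ((Nat.choose k (n - k) : R) * q ^ k) := by
    intro k hk
    have hk' : k ≤ n := Nat.lt_succ_iff.mp (Finset.mem_range.mp hk)
    rw [show n + 2 - (k + 1) = (n - k) + 1 by omega, show n + 1 - k = (n - k) + 1 by omega,
      Nat.choose_succ_succ']
    push_cast
    ring
  rw [Finset.sum_range_succ', Finset.sum_range_succ, Finset.sum_congr rfl pascal,
    Finset.sum_add_distrib, ← Finset.mul_sum, ← Finset.mul_sum, Finset.sum_range_succ _ (n + 1)]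
  simp
  ring

/-- Binet-type formula for `∑ₖ C(k, n - k) qᵏ`, where `a` and `b` are the roots of
`t² - q t - q`. -/
theorem sum_choose_sub_mul_pow_mul_sub {R : Type*} [CommRing R] {q a b : R}
    (hadd : a + b = q) (hmul : a * b = -q) (n : ℕ) :
    (∑ k ∈ Finset.range (n + 1), (Nat.choose k (n - k) : R) * q ^ k) * (a - b) =
      a ^ (n + 1) - b ^ (n + 1) := by
  induction n using Nat.twoStepInduction with
  | zero => simp
  | one =>
    simp [Finset.sum_range_succ, ← hadd]
    ring
  | more n ih₀ ih₁ =>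
    rw [sum_choose_sub_mul_pow_add_two, add_mul, mul_assoc, mul_assoc, ih₀, ih₁]
    have ha : a ^ 2 = q * a + q := by linear_combination a * hadd - hmul
    have hb : b ^ 2 = q * b + q := by linear_combination b * hadd - hmul
    linear_combination b ^ (n + 1) * hb - a ^ (n + 1) * ha

/-- Fix `q > 0` and set `λ₁ = (q + √(q² + 4q))/2`,
`λ₂ = (q − √(q² + 4q))/2`. For every real `x`, the series
`∑_{n≥0} Sₙ(q)·xⁿ/n!`, where `Sₙ(q) = ∑_{k=0}^n C(k, n−k)·qᵏ`, converges and equals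
`(λ₁·e^{λ₁x} − λ₂·e^{λ₂x})/(λ₁ − λ₂)`. -/
theorem egf_weakly_increasing_unit_fubini_lucky (q : ℝ) (hq : 0 < q) (x : ℝ)
    (lam1 lam2 : ℝ)
    (h1 : lam1 = (q + Real.sqrt (q ^ 2 + 4 * q)) / 2)
    (h2 : lam2 = (q - Real.sqrt (q ^ 2 + 4 * q)) / 2) :
    HasSum
      (fun n : ℕ =>
        (∑ k ∈ Finset.range (n + 1), (Nat.choose k (n - k) : ℝ) * q ^ k)
          * x ^ n / (Nat.factorial n))
      ((lam1 * Real.exp (lam1 * x) - lam2 * Real.exp (lam2 * x)) / (lam1 - lam2)) := by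
  have hpos : 0 < q ^ 2 + 4 * q := by positivity
  have hsq : Real.sqrt (q ^ 2 + 4 * q) ^ 2 = q ^ 2 + 4 * q := Real.sq_sqrt hpos.le
  have hadd : lam1 + lam2 = q := by rw [h1, h2]; ring
  have hmul : lam1 * lam2 = -q := by rw [h1, h2]; linear_combination -hsq / 4
  have hne : lam1 - lam2 ≠ 0 := by
    have hsub : lam1 - lam2 = Real.sqrt (q ^ 2 + 4 * q) := by rw [h1, h2]; ring
    rw [hsub]
    exact (Real.sqrt_pos.mpr hpos).ne'
  have hexp (c : ℝ) : HasSum (fun n : ℕ => (c * x) ^ n / (n.factorial : ℝ)) (Real.exp (c * x)) := by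
    rw [Real.exp_eq_exp_ℝ]
    exact NormedSpace.expSeries_div_hasSum_exp (c * x)
  refine Eq.mp (congrArg (HasSum · _) (funext fun n => ?_))
    ((((hexp lam1).mul_left lam1).sub ((hexp lam2).mul_left lam2)).div_const (lam1 - lam2))
  rw [div_eq_iff hne]
  linear_combination
    -(x ^ n / (n.factorial : ℝ)) * sum_choose_sub_mul_pow_mul_sub hadd hmul n
end

section
/- Let n ≥ 1 and let I = {i_1, i_2, …, i_k} ⊆ [n] with 1 = i_1 < i_2 < ⋯ < i_k ≤ n, and let U = [n] \ I = {u_1 < u_2 < ⋯ < u_{n−k}} be the complementary set of indices. Suppose that I is a lucky set of UFR_n, i.e., there exists at least one unit Fubini ranking β with n competitors whose set of lucky cars is exactly I. Then the number of unit Fubini rankings α with n competitors such that Lucky(α) = I equals k!·∏_{ℓ=1}^{n−k} (u_ℓ − 2ℓ + 1). -/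
open Finset

/-- The functions `Fin m → X` that choose distinct elements from prescribed finite sets. -/
abbrev DistinctChoice {X : Type*} {m : ℕ} (A : Fin m → Finset X) : Type _ :=
  {f : Fin m → X // Function.Injective f ∧ ∀ l, f l ∈ A l}

/-- A choice of distinct elements from `m + 1` sets is a choice from the first `m` of them
together with an unused element of the last one. -/
noncomputable def distinctChoiceSuccEquiv {X : Type*} [DecidableEq X] {m : ℕ}
    (A : Fin (m + 1) → Finset X) :
    DistinctChoice A ≃ Σ g : DistinctChoice (fun l => A l.castSucc),
      {x : X // x ∈ A (Fin.last m) \ univ.image g.1} where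
  toFun f := ⟨⟨fun l => f.1 l.castSucc,
      fun _ _ h => Fin.castSucc_injective _ (f.2.1 h), fun l => f.2.2 _⟩,
    ⟨f.1 (Fin.last m), by
      simp only [mem_sdiff, f.2.2, mem_image, mem_univ, true_and, not_exists]
      exact fun l h => (Fin.castSucc_lt_last l).ne (f.2.1 h)⟩⟩
  invFun p := ⟨Fin.snoc (α := fun _ => X) p.1.1 p.2.1, by
      have hp := p.2.2
      simp only [mem_sdiff, mem_image, mem_univ, true_and, not_exists] at hp
      rw [Fin.snoc_injective_iff]
      exact ⟨p.1.2.1, fun ⟨l, hl⟩ => hp.2 l hl⟩, by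
      have hp := p.2.2
      simp only [mem_sdiff] at hp
      intro l
      refine Fin.lastCases ?_ (fun l => ?_) l
      · simpa using hp.1
      · simpa using p.1.2.2 l⟩
  left_inv f := by
    ext l
    refine Fin.lastCases ?_ (fun l => ?_) l <;> simp
  right_inv p := by
    rcases p with ⟨⟨g, hg⟩, ⟨x, hx⟩⟩
    refine Sigma.subtype_ext (Subtype.ext ?_) ?_ <;> simp

/-- The number of choices of distinct elements from an increasing chain of finite sets. -/
theorem card_distinctChoice {X : Type*} [DecidableEq X] {m : ℕ} (A : Fin m → Finset X)
    (hA : Monotone A) : Nat.card (DistinctChoice A) = ∏ l, ((A l).card - (l : ℕ)) := by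
  induction m with
  | zero =>
    have : Unique (DistinctChoice A) :=
      ⟨⟨⟨Fin.elim0, fun a => a.elim0, fun a => a.elim0⟩⟩, fun f => Subsingleton.elim _ _⟩
    simp
  | succ m ih =>
    have hfin : Finite (DistinctChoice (fun l => A l.castSucc)) := by
      refine Finite.of_injective
        (β := ∀ l : Fin m, {x // x ∈ A l.castSucc}) (fun f l => ⟨f.1 l, f.2.2 l⟩) ?_
      intro f g h
      ext l
      exact congrArg Subtype.val (congrFun h l)
    have := Fintype.ofFinite (DistinctChoice (fun l => A l.castSucc))
    have hc (g : DistinctChoice (fun l => A l.castSucc)) :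
        Nat.card {x : X // x ∈ A (Fin.last m) \ univ.image g.1} =
          (A (Fin.last m)).card - m := by
      rw [Nat.card_eq_fintype_card, Fintype.card_coe, card_sdiff_of_subset,
        card_image_of_injective _ g.2.1, card_univ, Fintype.card_fin]
      intro x hx
      obtain ⟨l, -, rfl⟩ := mem_image.1 hx
      exact hA (Fin.le_last _) (g.2.2 l)
    rw [Nat.card_congr (distinctChoiceSuccEquiv A), Nat.card_sigma, Fintype.sum_congr _ _ hc,
      Fin.prod_univ_castSucc, sum_const, card_univ, smul_eq_mul, ← Nat.card_eq_fintype_card,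
      ih _ fun a b h => hA (Fin.castSucc_le_castSucc_iff.2 h)]
    simp

/-- `b` sends each index to the leader of its block, where the leaders are the elements of `I`,
each leader is the least element of its block and blocks have at most two elements. -/
structure IsLeaderMap {n : ℕ} (I : Finset (Fin n)) (b : Fin n → Fin n) : Prop where
  apply_of_mem : ∀ i ∈ I, b i = i
  apply_mem : ∀ i, b i ∈ I
  apply_lt : ∀ i ∉ I, b i < i
  injOn : ∀ i ∉ I, ∀ j ∉ I, b i = b j → i = j

namespace IsLeaderMap

variable {n : ℕ} {I : Finset (Fin n)} {b : Fin n → Fin n}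

theorem apply_le (hb : IsLeaderMap I b) (i : Fin n) : b i ≤ i := by
  by_cases hi : i ∈ I
  · exact (hb.apply_of_mem i hi).le
  · exact (hb.apply_lt i hi).le

theorem apply_apply (hb : IsLeaderMap I b) (i : Fin n) : b (b i) = b i :=
  hb.apply_of_mem _ (hb.apply_mem i)

/-- Leader maps correspond to choices of distinct smaller leaders for the non-leaders. -/
theorem card_eq {m : ℕ} (v : Fin m ↪o Fin n) (hv : ∀ i, i ∉ I ↔ ∃ l, v l = i) :
    Nat.card {b // IsLeaderMap I b} =
      Nat.card (DistinctChoice fun l => I.filter (· < v l)) := by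
  have hvI (l) : v l ∉ I := (hv _).2 ⟨l, rfl⟩
  refine Nat.card_congr (Equiv.ofBijective (fun b => ⟨fun l => b.1 (v l), ?_, ?_⟩) ⟨?_, ?_⟩)
  · exact fun x y h => v.injective (b.2.injOn _ (hvI x) _ (hvI y) h)
  · exact fun l => mem_filter.2 ⟨b.2.apply_mem _, b.2.apply_lt _ (hvI l)⟩
  · intro b b' h
    ext1
    funext i
    by_cases hi : i ∈ I
    · rw [b.2.apply_of_mem i hi, b'.2.apply_of_mem i hi]
    · obtain ⟨l, rfl⟩ := (hv i).1 hi
      exact congrFun (congrArg Subtype.val h) l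
  · rintro ⟨f, hf, hfA⟩
    have hext (l) : Function.extend v f id (v l) = f l := v.injective.extend_apply f id l
    have hmem (i) (hi : i ∈ I) : Function.extend v f id i = i :=
      Function.extend_apply' f id i fun h => (hv i).2 h hi
    simp only [mem_filter] at hfA
    refine ⟨⟨Function.extend v f id, hmem, fun i => ?_, fun i hi => ?_, fun i hi j hj h => ?_⟩, ?_⟩
    · by_cases hi : i ∈ I
      · rwa [hmem i hi]
      · obtain ⟨l, rfl⟩ := (hv i).1 hi
        rw [hext]
        exact (hfA l).1
    · obtain ⟨l, rfl⟩ := (hv i).1 hi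
      rw [hext]
      exact (hfA l).2
    · obtain ⟨l, rfl⟩ := (hv i).1 hi
      obtain ⟨l', rfl⟩ := (hv j).1 hj
      rw [hext, hext] at h
      rw [hf h]
    · ext1
      exact funext hext

end IsLeaderMap

/-- The ranking of the competitors according to a numerical score: the rank of `i` is the number
of competitors with a smaller score. -/
def scoreRanking {n k : ℕ} (s : Fin n → Fin k) (i : Fin n) : Fin n :=
  ⟨#{j | s j < s i}, by
    conv_rhs => rw [← Fintype.card_fin n, ← card_univ]
    exact card_lt_card (filter_ssubset.2 ⟨i, mem_univ _, lt_irrefl _⟩)⟩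

section scoreRanking

variable {n k : ℕ} (s : Fin n → Fin k)

theorem scoreRanking_lt_iff (i j : Fin n) :
    scoreRanking s i < scoreRanking s j ↔ s i < s j := by
  have hmono {i j : Fin n} (h : s i ≤ s j) : scoreRanking s i ≤ scoreRanking s j :=
    Fin.mk_le_mk.2 <| card_le_card fun x hx => by
      simp only [mem_filter, mem_univ, true_and] at hx ⊢
      exact hx.trans_le h
  refine ⟨fun h => not_le.1 fun h' => (hmono h').not_gt h, fun h => ?_⟩
  refine Fin.mk_lt_mk.2 <| card_lt_card (Finset.ssubset_iff_subset_ne.2 ⟨fun x hx => ?_, fun he => ?_⟩)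
  · simp only [mem_filter, mem_univ, true_and] at hx ⊢
    exact hx.trans h
  · have := he.symm.subset (mem_filter.2 ⟨mem_univ i, h⟩)
    simp at this

theorem scoreRanking_eq_iff (i j : Fin n) :
    scoreRanking s i = scoreRanking s j ↔ s i = s j := by
  have h₁ := scoreRanking_lt_iff s i j
  have h₂ := scoreRanking_lt_iff s j i
  grind

theorem isFubini_scoreRanking : IsFubini (scoreRanking s) := by
  rintro _ ⟨i, rfl⟩
  simp only [scoreRanking_lt_iff]
  rfl

/-- A Fubini ranking is recovered from any score that induces the same comparisons. -/
theorem IsFubini.scoreRanking_eq {α : Fin n → Fin n} (hα : IsFubini α)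
    (h : ∀ i j, s i < s j ↔ α i < α j) : scoreRanking s = α := by
  ext i
  rw [← hα (α i) ⟨i, rfl⟩]
  simp only [scoreRanking, h]

end scoreRanking

/-- Two bijections to `Fin k` inducing the same order agree. -/
theorem equiv_fin_eq_of_lt_iff {ι : Type*} {k : ℕ} (σ τ : ι ≃ Fin k)
    (h : ∀ i j, σ i < σ j ↔ τ i < τ j) : σ = τ := by
  have hmono : StrictMono fun x => τ (σ.symm x) := fun x y hxy => (h _ _).1 (by simpa using hxy)
  ext i
  simpa using congrArg Fin.val (congrFun hmono.eq_id (σ i)).symm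

/-- An injective family in a linear order, indexed by `k` elements, can be standardised. -/
theorem exists_equiv_fin_lt_iff {ι X : Type*} [Fintype ι] [LinearOrder X] {k : ℕ}
    (hk : Fintype.card ι = k) (g : ι → X) (hg : Function.Injective g) :
    ∃ σ : ι ≃ Fin k, ∀ i j, σ i < σ j ↔ g i < g j := by
  let := LinearOrder.lift' g hg
  exact ⟨(Fintype.orderIsoFinOfCardEq ι hk).symm.toEquiv, fun i j =>
    (Fintype.orderIsoFinOfCardEq ι hk).symm.lt_iff_lt⟩

section blocks

variable {n k : ℕ} {I : Finset (Fin n)} {b : Fin n → Fin n}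

/-- The ranking in which the blocks of a leader map are ordered by `σ`. -/
def blockRanking (hb : IsLeaderMap I b) (σ : I ≃ Fin k) : Fin n → Fin n :=
  scoreRanking fun i => σ ⟨b i, hb.apply_mem i⟩

theorem blockRanking_eq_iff (hb : IsLeaderMap I b) (σ : I ≃ Fin k) (i j : Fin n) :
    blockRanking hb σ i = blockRanking hb σ j ↔ b i = b j := by
  simp [blockRanking, scoreRanking_eq_iff]

theorem isUnit2_blockRanking (hb : IsLeaderMap I b) (σ : I ≃ Fin k) :
    IsUnit2 (blockRanking hb σ) := by
  intro r
  rw [← card_filter_add_card_filter_not (s := univ.filter _) (· ∈ I)]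
  refine add_le_add (b := 1) (d := 1) (card_le_one.2 ?_) (card_le_one.2 ?_) <;>
    simp only [mem_filter, mem_univ, true_and] <;>
    rintro i ⟨hi, hiI⟩ j ⟨hj, hjI⟩ <;>
    have h := (blockRanking_eq_iff hb σ i j).1 (hi.trans hj.symm)
  · rwa [hb.apply_of_mem i hiI, hb.apply_of_mem j hjI] at h
  · exact hb.injOn i hiI j hjI h

theorem luckySet_blockRanking (hb : IsLeaderMap I b) (σ : I ≃ Fin k) :
    luckySet (blockRanking hb σ) = I := by
  ext i
  simp only [luckySet, mem_filter, mem_univ, true_and, ne_eq, blockRanking_eq_iff]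
  refine ⟨fun h => by_contra fun hi => h _ (hb.apply_lt i hi) (hb.apply_apply i),
    fun hi j hj h => ?_⟩
  rw [hb.apply_of_mem i hi] at h
  exact (h ▸ hb.apply_le j).not_gt hj

/-- Every ranking with at most two competitors per rank has a leader map for its lucky set. -/
theorem exists_isLeaderMap {α : Fin n → Fin n} (hα : IsUnit2 α) :
    ∃ b, IsLeaderMap (luckySet α) b ∧ ∀ i, α (b i) = α i := by
  have hex (i) : ∃ j ∈ luckySet α, α j = α i := by
    induction i using WellFoundedLT.induction with
    | ind i ih =>
      by_cases hi : i ∈ luckySet α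
      · exact ⟨i, hi, rfl⟩
      · simp only [luckySet, mem_filter, mem_univ, true_and, not_forall, not_not] at hi
        obtain ⟨j, hj, hji⟩ := hi
        obtain ⟨l, hl, hlj⟩ := ih j hj
        exact ⟨l, hl, hlj.trans hji⟩
  choose b hbI hb using hex
  have hle {i j} (hi : i ∈ luckySet α) (h : α i = α j) : i ≤ j :=
    not_lt.1 fun hlt => (mem_filter.1 hi).2 j hlt h.symm
  have hne {i} (hi : i ∉ luckySet α) : b i ≠ i := fun h => hi (h ▸ hbI i)
  refine ⟨b, ⟨fun i hi => ?_, hbI, fun i hi => ?_, fun i hi j hj h => ?_⟩, hb⟩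
  · exact le_antisymm (hle (hbI i) (hb i)) (hle hi (hb i).symm)
  · exact lt_of_le_of_ne (hle (hbI i) (hb i)) (hne hi)
  · by_contra hij
    have hsub : ({i, j, b i} : Finset (Fin n)) ⊆ univ.filter (fun x => α x = α i) := by
      intro x hx
      simp only [mem_insert, mem_singleton] at hx
      simp only [mem_filter, mem_univ, true_and]
      rcases hx with rfl | rfl | rfl
      · rfl
      · rw [← hb x, ← h, hb]
      · exact hb i
    have h3 : #({i, j, b i} : Finset (Fin n)) = 3 :=
      card_eq_three.2 ⟨i, j, b i, hij, (hne hi).symm, h ▸ (hne hj).symm, rfl⟩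
    have := (card_le_card hsub).trans (hα (α i))
    omega

/-- Unit Fubini rankings with lucky set `I` correspond to a leader map together with an ordering
of the blocks. -/
theorem card_unitFubini_eq (hI : #I = k) :
    Nat.card {α : Fin n → Fin n // IsFubini α ∧ IsUnit2 α ∧ luckySet α = I} =
      k.factorial * Nat.card {b // IsLeaderMap I b} := by
  have hcard : Nat.card (I ≃ Fin k) = k.factorial := by
    rw [Nat.card_eq_fintype_card, Fintype.card_equiv (I.equivFinOfCardEq hI), Fintype.card_coe, hI]
  rw [← hcard, mul_comm, ← Nat.card_prod]
  refine (Nat.card_congr (Equiv.ofBijective (fun p => ⟨blockRanking p.1.2 p.2,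
    isFubini_scoreRanking _, isUnit2_blockRanking _ _, luckySet_blockRanking _ _⟩)
    ⟨?_, ?_⟩)).symm
  · rintro ⟨⟨b, hb⟩, σ⟩ ⟨⟨b', hb'⟩, σ'⟩ h
    replace h : blockRanking hb σ = blockRanking hb' σ' := congrArg Subtype.val h
    obtain rfl : b = b' := by
      funext i
      have hi := (blockRanking_eq_iff hb σ _ _).2 (hb.apply_apply i)
      rwa [h, blockRanking_eq_iff, hb'.apply_of_mem _ (hb.apply_mem i)] at hi
    obtain rfl : σ = σ' := by
      refine equiv_fin_eq_of_lt_iff _ _ fun i j => ?_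
      have h₁ := scoreRanking_lt_iff (fun i => σ ⟨b i, hb.apply_mem i⟩) i j
      have h₂ := scoreRanking_lt_iff (fun i => σ' ⟨b i, hb.apply_mem i⟩) i j
      change blockRanking hb σ i < blockRanking hb σ j ↔ _ at h₁
      rw [h] at h₁
      simpa only [hb.apply_of_mem _ i.2, hb.apply_of_mem _ j.2] using h₁.symm.trans h₂
    rfl
  · rintro ⟨α, hF, hU, rfl⟩
    obtain ⟨b, hb, hαb⟩ := exists_isLeaderMap hU
    obtain ⟨σ, hσ⟩ := exists_equiv_fin_lt_iff (k := k) (by rw [Fintype.card_coe, hI])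
      (fun i : luckySet α => α i) fun i j h => by
        have hi := (mem_filter.1 i.2).2 j
        have hj := (mem_filter.1 j.2).2 i
        exact Subtype.ext (le_antisymm (not_lt.1 fun hlt => hi hlt h.symm)
          (not_lt.1 fun hlt => hj hlt h))
    refine ⟨⟨⟨b, hb⟩, σ⟩, Subtype.ext (hF.scoreRanking_eq _ fun i j => ?_)⟩
    rw [hσ, hαb, hαb]

end blocks

/-- If `v` enumerates the complement of `I` increasingly, then `v l - l` elements of `I` lie
below `v l`. -/
theorem card_filter_lt_of_enum_compl {n m : ℕ} {I : Finset (Fin n)} (v : Fin m ↪o Fin n)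
    (hv : ∀ i, i ∉ I ↔ ∃ l, v l = i) (l : Fin m) :
    #(I.filter (· < v l)) = (v l : ℕ) - l := by
  have hout : #((Iio (v l)).filter (· ∉ I)) = l := by
    rw [← Fin.card_Iio l, ← card_map v.toEmbedding]
    congr 1
    ext i
    simp only [mem_filter, mem_Iio, hv, mem_map]
    constructor
    · rintro ⟨h, l', rfl⟩
      exact ⟨l', v.lt_iff_lt.1 h, rfl⟩
    · rintro ⟨l', h, rfl⟩
      exact ⟨v.lt_iff_lt.2 h, l', rfl⟩
  have hin : I.filter (· < v l) = (Iio (v l)).filter (· ∈ I) := by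
    ext i
    simp [and_comm]
  have := card_filter_add_card_filter_not (s := Iio (v l)) (· ∈ I)
  rw [Fin.card_Iio] at this
  rw [hin]
  omega

/-- An increasing sequence whose first `m` terms cover the `m` values of a strictly increasing
`v` lists these values in order. -/
theorem enum_eq_of_cover {m : ℕ} (v : Fin m → ℕ) (hv : StrictMono v) (u : Fin m → ℕ)
    (hu : StrictMono u) (h : ∀ l, ∃ l', v l = u l') : v = u := by
  choose g hg using h
  have hgm : StrictMono g := fun a b hab => hu.lt_iff_lt.1 (by rw [← hg, ← hg]; exact hv hab)
  funext l
  rw [hg, hgm.eq_id, id]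

/-- Let `I ⊆ [n]` contain car `1`, with `|I| = k`, and let
`u₁ < u₂ < ⋯ < u_{n−k}` enumerate the car numbers (in `{1,…,n}`) of the complement
`U = [n] \ I`. If `I` is a lucky set of `UFR_n` (some unit Fubini ranking has lucky set
exactly `I`), then the number of unit Fubini rankings with `n` competitors whose lucky
set is exactly `I` equals `k! · ∏_{ℓ=1}^{n−k} (u_ℓ − 2ℓ + 1)`.
Here a car index `m : Fin n` corresponds to the car number `m + 1`, and the factor
`u_ℓ − 2ℓ + 1` is written as `u ℓ + 1 - 2*ℓ` in `ℕ`. -/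
theorem card_unit_fubini_fixed_lucky_set (n k : ℕ) (hn : 1 ≤ n) (hk : 1 ≤ k)
    (I : Finset (Fin n)) (hI : I.card = k) (h1 : (⟨0, hn⟩ : Fin n) ∈ I)
    (u : ℕ → ℕ)
    (humono : ∀ a b : ℕ, 1 ≤ a → a < b → b ≤ n - k → u a < u b)
    (hUdesc : ∀ m : Fin n, m ∉ I ↔ ∃ ℓ : ℕ, 1 ≤ ℓ ∧ ℓ ≤ n - k ∧ (m : ℕ) + 1 = u ℓ)
    (hadm : ∃ β : Fin n → Fin n, IsFubini β ∧ IsUnit2 β ∧ luckySet β = I) :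
    Nat.card {α : Fin n → Fin n // IsFubini α ∧ IsUnit2 α ∧ luckySet α = I}
      = Nat.factorial k * ∏ ℓ ∈ Finset.Icc 1 (n - k), (u ℓ + 1 - 2 * ℓ) := by
  have hcard : #Iᶜ = n - k := by rw [card_compl, Fintype.card_fin, hI]
  let v := Iᶜ.orderEmbOfFin hcard
  have hv (i) : i ∉ I ↔ ∃ l, v l = i := by
    rw [← mem_compl, ← Finset.mem_coe, ← Iᶜ.range_orderEmbOfFin hcard, Set.mem_range]
  have huv : (fun l => (v l : ℕ) + 1) = fun l : Fin (n - k) => u (l + 1) := by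
    refine enum_eq_of_cover _ (fun a b h => Nat.succ_lt_succ (v.strictMono h)) _
      (fun a b h => humono _ _ (by omega) (Nat.succ_lt_succ h) b.2) fun l => ?_
    obtain ⟨l', h₁, h₂, h₃⟩ := (hUdesc (v l)).1 ((hv _).2 ⟨l, rfl⟩)
    exact ⟨⟨l' - 1, by omega⟩, by simpa [Nat.sub_add_cancel h₁] using h₃⟩
  rw [card_unitFubini_eq hI, IsLeaderMap.card_eq v hv, card_distinctChoice _
    fun a b h => monotone_filter_right I fun i _ hi => hi.trans_le (v.monotone h)]
  congr 1
  have hrange : ∏ l ∈ Icc 1 (n - k), (u l + 1 - 2 * l) =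
      ∏ l ∈ range (n - k), (u (l + 1) + 1 - 2 * (l + 1)) := by
    rw [range_eq_Ico, prod_Ico_add' (fun l => u l + 1 - 2 * l)]
    rfl
  rw [hrange, ← Fin.prod_univ_eq_prod_range (fun l => u (l + 1) + 1 - 2 * (l + 1))]
  refine prod_congr rfl fun l _ => ?_
  rw [card_filter_lt_of_enum_compl v hv, ← congrFun huv l]
  omega
end
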